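/- arXiv:2007.06148 — 3 statements merged into one kernel-verified Lean document; each statement's English description precedes it below -/
import Mathlib

section
/- Let z* be a local minimizer of the MPSC, let d ∈ C(z*) be a critical direction, suppose MPSC quasi-normality holds at z* in direction d, and suppose f, g, h, G, H are twice differentiable at z*. Then there exists an M-multiplier in direction d, i.e. multipliers (λ^g, λ^h, λ^G, λ^H) satisfying the M-stationarity conditions in direction d, such that in addition the second-order condition dᵀ ∇²_z L(z*, λ^g, λ^h, λ^G, λ^H) d ≥ 0 holds, where L(z, λ^g, λ^h, λ^G, λ^H) := f(z) + Σ_{i=1}^p λ_i^g g_i(z) + Σ_{j=1}^q λ_j^h h_j(z) + Σ_{i=1}^m (λ_i^G G_i(z) + λ_i^H H_i(z)). -/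
open scoped Classical InnerProductSpace
open Filter Topology

noncomputable section

/-- Euclidean space `ℝⁿ`. -/
abbrev Euc (n : ℕ) : Type := EuclideanSpace ℝ (Fin n)

/-- Data of a mathematical program with switching constraints (MPSC):
`min f(z)` s.t. `g(z) ≤ 0`, `h(z) = 0`, `Gᵢ(z)Hᵢ(z) = 0 (i = 1,…,m)`,
with all defining functions continuously differentiable (gradients `f'`, `g'`, … are
genuine gradient maps, and they are continuous). -/
structure MPSC (n p q m : ℕ) where
  f : Euc n → ℝ
  g : Fin p → Euc n → ℝ
  h : Fin q → Euc n → ℝ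
  G : Fin m → Euc n → ℝ
  H : Fin m → Euc n → ℝ
  f' : Euc n → Euc n
  g' : Fin p → Euc n → Euc n
  h' : Fin q → Euc n → Euc n
  G' : Fin m → Euc n → Euc n
  H' : Fin m → Euc n → Euc n
  grad_f : ∀ z, HasGradientAt f (f' z) z
  grad_g : ∀ i z, HasGradientAt (g i) (g' i z) z
  grad_h : ∀ j z, HasGradientAt (h j) (h' j z) z
  grad_G : ∀ i z, HasGradientAt (G i) (G' i z) z
  grad_H : ∀ i z, HasGradientAt (H i) (H' i z) z
  cont_f' : Continuous f'
  cont_g' : ∀ i, Continuous (g' i)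
  cont_h' : ∀ j, Continuous (h' j)
  cont_G' : ∀ i, Continuous (G' i)
  cont_H' : ∀ i, Continuous (H' i)

namespace MPSC

variable {n p q m : ℕ} (P : MPSC n p q m)

/-- The feasible region `F` of the MPSC. -/
def Feas : Set (Euc n) :=
  {z | (∀ i, P.g i z ≤ 0) ∧ (∀ j, P.h j z = 0) ∧ ∀ i, P.G i z * P.H i z = 0}

/-- Active inequality constraints `I_g*`. -/
def Ig (zs : Euc n) : Set (Fin p) := {i | P.g i zs = 0}

/-- `I_G* = {i : Gᵢ(z*) = 0, Hᵢ(z*) ≠ 0}`. -/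
def IGs (zs : Euc n) : Set (Fin m) := {i | P.G i zs = 0 ∧ P.H i zs ≠ 0}

/-- `I_H* = {i : Gᵢ(z*) ≠ 0, Hᵢ(z*) = 0}`. -/
def IHs (zs : Euc n) : Set (Fin m) := {i | P.G i zs ≠ 0 ∧ P.H i zs = 0}

/-- `I_GH* = {i : Gᵢ(z*) = Hᵢ(z*) = 0}`. -/
def IGH (zs : Euc n) : Set (Fin m) := {i | P.G i zs = 0 ∧ P.H i zs = 0}

/-- `I_g*(d)`. -/
def Igd (zs d : Euc n) : Set (Fin p) := {i | P.g i zs = 0 ∧ ⟪P.g' i zs, d⟫_ℝ = 0}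

/-- `I_G*(d)`. -/
def IGd (zs d : Euc n) : Set (Fin m) :=
  {i | i ∈ P.IGH zs ∧ ⟪P.G' i zs, d⟫_ℝ = 0 ∧ ⟪P.H' i zs, d⟫_ℝ ≠ 0}

/-- `I_H*(d)`. -/
def IHd (zs d : Euc n) : Set (Fin m) :=
  {i | i ∈ P.IGH zs ∧ ⟪P.G' i zs, d⟫_ℝ ≠ 0 ∧ ⟪P.H' i zs, d⟫_ℝ = 0}

/-- `I_GH*(d)`. -/
def IGHd (zs d : Euc n) : Set (Fin m) :=
  {i | i ∈ P.IGH zs ∧ ⟪P.G' i zs, d⟫_ℝ = 0 ∧ ⟪P.H' i zs, d⟫_ℝ = 0}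

/-- The linearization cone `L(z*)` of the MPSC at `z*`. -/
def LinCone (zs : Euc n) : Set (Euc n) :=
  {d | (∀ i ∈ P.Ig zs, ⟪P.g' i zs, d⟫_ℝ ≤ 0) ∧ (∀ j, ⟪P.h' j zs, d⟫_ℝ = 0) ∧
       (∀ i ∈ P.IGs zs, ⟪P.G' i zs, d⟫_ℝ = 0) ∧ (∀ i ∈ P.IHs zs, ⟪P.H' i zs, d⟫_ℝ = 0) ∧
       (∀ i ∈ P.IGH zs, ⟪P.G' i zs, d⟫_ℝ * ⟪P.H' i zs, d⟫_ℝ = 0)}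

/-- The critical cone `C(z*)`. -/
def Crit (zs : Euc n) : Set (Euc n) := {d ∈ P.LinCone zs | ⟪P.f' zs, d⟫_ℝ ≤ 0}

/-- `(λ^g, λ^h, λ^G, λ^H)` is an M-multiplier in direction `d` at `z*`. -/
def IsMMultDir (zs d : Euc n) (lg : Fin p → ℝ) (lh : Fin q → ℝ) (lG lH : Fin m → ℝ) : Prop :=
  ((0 : Euc n) = P.f' zs
      + (∑ i ∈ Finset.univ.filter (fun i => i ∈ P.Igd zs d), lg i • P.g' i zs)
      + (∑ j, lh j • P.h' j zs) + (∑ i, (lG i • P.G' i zs + lH i • P.H' i zs))) ∧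
  (∀ i ∈ P.Igd zs d, 0 ≤ lg i) ∧ (∀ i ∉ P.Igd zs d, lg i = 0) ∧
  (∀ i, i ∈ P.IHs zs ∪ P.IHd zs d → lG i = 0) ∧
  (∀ i, i ∈ P.IGs zs ∪ P.IGd zs d → lH i = 0) ∧
  ∀ i ∈ P.IGHd zs d, lG i * lH i = 0

/-- `z*` is M-stationary in direction `d`. -/
def MStatDir (zs d : Euc n) : Prop :=
  ∃ (lg : Fin p → ℝ) (lh : Fin q → ℝ) (lG lH : Fin m → ℝ), P.IsMMultDir zs d lg lh lG lH

/-- `z*` is S-stationary in direction `d`. -/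
def SStatDir (zs d : Euc n) : Prop :=
  ∃ (lg : Fin p → ℝ) (lh : Fin q → ℝ) (lG lH : Fin m → ℝ),
    P.IsMMultDir zs d lg lh lG lH ∧ ∀ i ∈ P.IGHd zs d, lG i = 0 ∧ lH i = 0

/-- MPSC-LICQ in direction `d` at `z*`. -/
def LICQd (zs d : Euc n) : Prop :=
  LinearIndependent ℝ
    (Sum.elim (fun i : {i // i ∈ P.Igd zs d} => P.g' i.1 zs)
      (Sum.elim (fun j : Fin q => P.h' j zs)
        (Sum.elim (fun i : {i // i ∈ P.IGs zs ∪ P.IGd zs d ∪ P.IGHd zs d} => P.G' i.1 zs)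
          (fun i : {i // i ∈ P.IHs zs ∪ P.IHd zs d ∪ P.IGHd zs d} => P.H' i.1 zs))))

/-- MPSC-LICQ at `z*`. -/
def LICQ (zs : Euc n) : Prop :=
  LinearIndependent ℝ
    (Sum.elim (fun i : {i // i ∈ P.Ig zs} => P.g' i.1 zs)
      (Sum.elim (fun j : Fin q => P.h' j zs)
        (Sum.elim (fun i : {i // i ∈ P.IGs zs ∪ P.IGH zs} => P.G' i.1 zs)
          (fun i : {i // i ∈ P.IHs zs ∪ P.IGH zs} => P.H' i.1 zs))))

/-- MPSC quasi-normality at `z*` in direction `d`. -/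
def QuasiNormalDir (zs d : Euc n) : Prop :=
  ∀ (lg : Fin p → ℝ) (lh : Fin q → ℝ) (lG lH : Fin m → ℝ),
    ((0 : Euc n) = (∑ i, lg i • P.g' i zs) + (∑ j, lh j • P.h' j zs)
        + (∑ i, (lG i • P.G' i zs + lH i • P.H' i zs))) →
    ((∀ i ∈ P.Igd zs d, 0 ≤ lg i) ∧ (∀ i ∉ P.Igd zs d, lg i = 0) ∧
      (∀ i, i ∈ P.IGs zs ∪ P.IGd zs d → lH i = 0) ∧
      (∀ i, i ∈ P.IHs zs ∪ P.IHd zs d → lG i = 0) ∧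
      ∀ i ∈ P.IGHd zs d, lG i * lH i = 0) →
    (∃ (dk : ℕ → Euc n) (t : ℕ → ℝ),
      Tendsto dk atTop (𝓝 d) ∧ (∀ k, 0 < t k) ∧ Tendsto t atTop (𝓝 0) ∧
      ∀ k, (∀ i, lg i ≠ 0 → 0 < lg i * P.g i (zs + t k • dk k)) ∧
        (∀ j, lh j ≠ 0 → 0 < lh j * P.h j (zs + t k • dk k)) ∧
        (∀ i, lG i ≠ 0 → 0 < lG i * P.G i (zs + t k • dk k)) ∧
        (∀ i, lH i ≠ 0 → 0 < lH i * P.H i (zs + t k • dk k))) →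
    lg = 0 ∧ lh = 0 ∧ lG = 0 ∧ lH = 0

/-- MPSC directional quasi-normality at `z*`: quasi-normality in every direction of
the linearization cone. -/
def DirQuasiNormal (zs : Euc n) : Prop := ∀ d ∈ P.LinCone zs, P.QuasiNormalDir zs d

/-- `(λ^g, λ^h, λ^G, λ^H)` is an S-multiplier at `z*` (S-stationarity conditions). -/
def IsSMult (zs : Euc n) (lg : Fin p → ℝ) (lh : Fin q → ℝ) (lG lH : Fin m → ℝ) : Prop :=
  ((0 : Euc n) = P.f' zs
      + (∑ i ∈ Finset.univ.filter (fun i => i ∈ P.Ig zs), lg i • P.g' i zs)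
      + (∑ j, lh j • P.h' j zs) + (∑ i, (lG i • P.G' i zs + lH i • P.H' i zs))) ∧
  (∀ i ∈ P.Ig zs, 0 ≤ lg i) ∧ (∀ i ∈ P.IHs zs, lG i = 0) ∧ (∀ i ∈ P.IGs zs, lH i = 0) ∧
  ∀ i ∈ P.IGH zs, lG i = 0 ∧ lH i = 0

/-- `(λ^g, λ^h, λ^G, λ^H)` is an M-multiplier at `z*` (M-stationarity conditions). -/
def IsMMult (zs : Euc n) (lg : Fin p → ℝ) (lh : Fin q → ℝ) (lG lH : Fin m → ℝ) : Prop :=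
  ((0 : Euc n) = P.f' zs
      + (∑ i ∈ Finset.univ.filter (fun i => i ∈ P.Ig zs), lg i • P.g' i zs)
      + (∑ j, lh j • P.h' j zs) + (∑ i, (lG i • P.G' i zs + lH i • P.H' i zs))) ∧
  (∀ i ∈ P.Ig zs, 0 ≤ lg i) ∧ (∀ i ∈ P.IHs zs, lG i = 0) ∧ (∀ i ∈ P.IGs zs, lH i = 0) ∧
  ∀ i ∈ P.IGH zs, lG i * lH i = 0

/-- The rank `r(z*; d)` of the relevant family of gradients. -/
def rankd (zs d : Euc n) : ℕ :=
  Set.finrank ℝ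
    ((fun i => P.g' i zs) '' P.Igd zs d ∪ Set.range (fun j => P.h' j zs) ∪
      (fun i => P.G' i zs) '' (P.IGs zs ∪ P.IGd zs d ∪ P.IGHd zs d) ∪
      (fun i => P.H' i zs) '' (P.IHs zs ∪ P.IHd zs d ∪ P.IGHd zs d))

/-- `(J_g, J_G, J_H)` is an MPSC working set in direction `d`. -/
def IsWorkingSet (zs d : Euc n) (Jg : Finset (Fin p)) (JG JH : Finset (Fin m)) : Prop :=
  (∀ i ∈ Jg, i ∈ P.Igd zs d) ∧
  (∀ i ∈ JG, i ∈ P.IGs zs ∪ P.IGd zs d ∪ P.IGHd zs d) ∧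
  (∀ i ∈ JH, i ∈ P.IHs zs ∪ P.IHd zs d ∪ P.IGHd zs d) ∧
  JG ∪ JH = Finset.univ ∧
  Jg.card + q + JG.card + JH.card = P.rankd zs d ∧
  LinearIndependent ℝ
    (Sum.elim (fun i : {i // i ∈ Jg} => P.g' i.1 zs)
      (Sum.elim (fun j : Fin q => P.h' j zs)
        (Sum.elim (fun i : {i // i ∈ JG} => P.G' i.1 zs)
          (fun i : {i // i ∈ JH} => P.H' i.1 zs))))

/-- `z*` is strongly M-stationary in direction `d`. -/
def StronglyMStatDir (zs d : Euc n) : Prop :=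
  ∃ (Jg : Finset (Fin p)) (JG JH : Finset (Fin m)) (lg : Fin p → ℝ) (lh : Fin q → ℝ)
    (lG lH : Fin m → ℝ),
    P.IsWorkingSet zs d Jg JG JH ∧ P.IsMMultDir zs d lg lh lG lH ∧
    (∀ i ∉ Jg, lg i = 0) ∧ (∀ i ∉ JG, lG i = 0) ∧ (∀ i ∉ JH, lH i = 0) ∧
    ∀ i ∈ JG ∩ JH, lG i = 0 ∧ lH i = 0

/-- The MPSC constraint-violation residual. -/
def residual (z : Euc n) : ℝ :=
  (∑ i, max (P.g i z) 0) + (∑ j, |P.h j z|) + ∑ i, min |P.G i z| |P.H i z|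

/-- The MPSC local error bound property around `z*`. -/
def ErrorBound (zs : Euc n) : Prop :=
  ∃ V ∈ 𝓝 zs, ∃ α > (0 : ℝ), ∀ z ∈ V, Metric.infDist z P.Feas ≤ α * P.residual z

/-- Equality-constraint gradients (at `z`) of the branch problem `NLP(β₁, β₂)`. -/
def EqGrads (zs : Euc n) (b1 b2 : Set (Fin m)) (z : Euc n) : Set (Euc n) :=
  Set.range (fun j => P.h' j z) ∪ (fun i => P.G' i z) '' (P.IGs zs ∪ b1) ∪
    (fun i => P.H' i z) '' (P.IHs zs ∪ b2)

/-- The index set `I⁻` of the branch problem `NLP(β₁, β₂)` at `z*`. -/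
def Iminus (zs : Euc n) (b1 b2 : Set (Fin m)) : Set (Fin p) :=
  {l | l ∈ P.Ig zs ∧
    ∃ (lh : Fin q → ℝ) (lG lH : Fin m → ℝ) (mu : Fin p → ℝ),
      (∀ i, i ∉ P.IGs zs ∪ b1 → lG i = 0) ∧ (∀ i, i ∉ P.IHs zs ∪ b2 → lH i = 0) ∧
      (∀ i, 0 ≤ mu i) ∧ (∀ i, ¬(i ∈ P.Ig zs ∧ i ≠ l) → mu i = 0) ∧
      -(P.g' l zs) = (∑ j, lh j • P.h' j zs)
        + (∑ i, (lG i • P.G' i zs + lH i • P.H' i zs)) + (∑ i, mu i • P.g' i zs)}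

/-- CRSC holds at `z*` for the branch problem `NLP(β₁, β₂)`. -/
def CRSCpiece (zs : Euc n) (b1 b2 : Set (Fin m)) : Prop :=
  ∃ U ∈ 𝓝 zs, ∀ z ∈ U,
    Set.finrank ℝ ((fun i => P.g' i z) '' P.Iminus zs b1 b2 ∪ P.EqGrads zs b1 b2 z) =
      Set.finrank ℝ ((fun i => P.g' i zs) '' P.Iminus zs b1 b2 ∪ P.EqGrads zs b1 b2 zs)

/-- MPSC piecewise CRSC: CRSC holds for every branch problem `NLP(β₁, β₂)`. -/
def PiecewiseCRSC (zs : Euc n) : Prop :=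
  ∀ b1 b2 : Set (Fin m), b1 ∪ b2 = P.IGH zs → b1 ∩ b2 = ∅ → P.CRSCpiece zs b1 b2

/-- The set-valued map `K` (index sets frozen at `z*`, gradients at `z`). -/
def Kmap (zs z : Euc n) : Set (Euc n) :=
  {y | ∃ (lg : Fin p → ℝ) (lh : Fin q → ℝ) (lG lH : Fin m → ℝ),
      (∀ i, 0 ≤ lg i) ∧ (∀ i, i ∉ P.Ig zs → lg i = 0) ∧
      (∀ i ∈ P.IGs zs, lH i = 0) ∧ (∀ i ∈ P.IHs zs, lG i = 0) ∧
      (∀ i ∈ P.IGH zs, lG i * lH i = 0) ∧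
      y = (∑ i, lg i • P.g' i z) + (∑ j, lh j • P.h' j z)
          + (∑ i, (lG i • P.G' i z + lH i • P.H' i z))}

/-- `z*` is AM-regular. -/
def AMRegular (zs : Euc n) : Prop :=
  ∀ y : Euc n,
    (∃ zk yk : ℕ → Euc n, Tendsto zk atTop (𝓝 zs) ∧ Tendsto yk atTop (𝓝 y) ∧
      ∀ k, yk k ∈ P.Kmap zs (zk k)) → y ∈ P.Kmap zs zs

/-- The regular (Fréchet) normal cone to `A` at `x`. -/
def frechetNormalCone (A : Set (Euc n)) (x : Euc n) : Set (Euc n) :=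
  {ζ | ∀ ε > (0 : ℝ), ∃ δ > (0 : ℝ), ∀ y ∈ A, ‖y - x‖ < δ → ⟪ζ, y - x⟫_ℝ ≤ ε * ‖y - x‖}

/-- The generalized Guignard constraint qualification at `z*`. -/
def GGCQ (zs : Euc n) : Prop :=
  frechetNormalCone P.Feas zs = {ζ | ∀ d ∈ P.LinCone zs, ⟪ζ, d⟫_ℝ ≤ 0}

/-- Membership in the multiplier set `R_SC`. -/
def InRSC (zs : Euc n) (lg : Fin p → ℝ) (lh : Fin q → ℝ) (lG lH : Fin m → ℝ) : Prop :=
  (∀ i, i ∉ P.Ig zs → lg i = 0) ∧ (∀ i ∈ P.IHs zs, lG i = 0) ∧ ∀ i ∈ P.IGs zs, lH i = 0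

/-- Membership in the multiplier set `N_SC`. -/
def InNSC (zs : Euc n) (mg : Fin p → ℝ) (mh : Fin q → ℝ) (mG mH : Fin m → ℝ) : Prop :=
  P.InRSC zs mg mh mG mH ∧
  (0 : Euc n) = (∑ i, mg i • P.g' i zs) + (∑ j, mh j • P.h' j zs)
      + (∑ i, (mG i • P.G' i zs + mH i • P.H' i zs))

/-- `z*` is Q-stationary with respect to the bipartition `(β₁, β₂)` of `I_GH*`. -/
def QStat (zs : Euc n) (b1 b2 : Set (Fin m)) : Prop :=
  ∃ (lg mg : Fin p → ℝ) (lh mh : Fin q → ℝ) (lG lH mG mH : Fin m → ℝ),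
    P.InRSC zs lg lh lG lH ∧
    ((0 : Euc n) = P.f' zs + (∑ i, lg i • P.g' i zs) + (∑ j, lh j • P.h' j zs)
        + (∑ i, (lG i • P.G' i zs + lH i • P.H' i zs))) ∧
    P.InNSC zs mg mh mG mH ∧
    (∀ i ∈ P.Ig zs, max (mg i) 0 ≤ lg i) ∧
    (∀ i ∈ b1, lH i = 0 ∧ lG i = mG i) ∧
    ∀ i ∈ b2, lG i = 0 ∧ lH i = mH i

end MPSC

/-!
Replace each switching constraint by one of the equations `G i = 0`, `H i = 0`, chosen so that `zs`
stays feasible and `d` stays critical: keep `G i = 0` where `d` allows it, and `H i = 0` otherwise.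
The resulting branch is a nonlinear program, `zs` is a local minimizer of it, and it inherits the
quasi-normality in direction `d`.

For a nonlinear program, quasi-normality yields an error bound near `zs` in direction `d`: if the
bound failed, Ekeland's principle would produce infeasible points approaching from direction
`d` at which the gradient of the residual tends to zero, and the normalized constraint violations
would accumulate at a multiplier excluded by quasi-normality. Hence `f + κ * residual` is an exact
penalty. Expanding it to second order along the arcs `t ↦ zs + t • d + t ^ 2 • w` gives, for each
`w`, a multiplier of norm at most `κ` for which the expansion is nonnegative. Sion's minimax theorem
makes the multiplier independent of `w`; the terms linear in `w` then give stationarity, and the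
constant ones the second-order condition.
-/

section DirectionalNeighbourhoods

variable {E : Type*} [NormedAddCommGroup E] [NormedSpace ℝ E] {x d : E}

/-- The filter of directional neighbourhoods of `x` in direction `d` (Gfrerer): it is generated by
the points `x + t • v` with `t ↓ 0` and `v → d`. -/
def dirNhds (x d : E) : Filter E :=
  map (fun s : ℝ × E => x + s.1 • s.2) (𝓝[>] 0 ×ˢ 𝓝 d)

lemma tendsto_dirNhds {α : Type*} {l : Filter α} {t : α → ℝ} {v : α → E}
    (ht : Tendsto t l (𝓝[>] 0)) (hv : Tendsto v l (𝓝 d)) :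
    Tendsto (fun a => x + t a • v a) l (dirNhds x d) :=
  tendsto_map.comp (ht.prodMk hv)

lemma tendsto_smul_nhdsGT_prod_nhds :
    Tendsto (fun s : ℝ × E => s.1 • s.2) (𝓝[>] 0 ×ˢ 𝓝 d) (𝓝 0) := by
  have ht : Tendsto Prod.fst (𝓝[>] (0 : ℝ) ×ˢ 𝓝 d) (𝓝 0) := tendsto_fst.mono_right inf_le_left
  simpa using ht.smul tendsto_snd

lemma dirNhds_le_nhds : dirNhds x d ≤ 𝓝 x := by
  have hz := tendsto_smul_nhdsGT_prod_nhds (d := d) |>.const_add x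
  rwa [add_zero] at hz

lemma exists_eventually_dirNhds_forall_dist_le {U : Set E} (hU : U ∈ dirNhds x d) :
    ∃ ε > 0, ∀ᶠ z in dirNhds x d, ∀ y, dist y z ≤ ε * dist x z → y ∈ U := by
  obtain ⟨T, hT, B, hB, hTB⟩ := mem_prod_iff.1 (mem_map.1 hU)
  obtain ⟨δ, hδ, hδB⟩ := Metric.mem_nhds_iff.1 hB
  refine ⟨δ / 2 / (‖d‖ + δ), by positivity, ?_⟩
  rw [dirNhds, eventually_map]
  filter_upwards [prod_mem_prod (inter_mem hT self_mem_nhdsWithin)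
    (Metric.ball_mem_nhds d (half_pos hδ))]
  rintro ⟨t, v⟩ ⟨⟨htT, ht : 0 < t⟩, hv⟩ y hy
  have hv' : ‖v - d‖ < δ / 2 := mem_ball_iff_norm.1 hv
  have hv_le : ‖v‖ ≤ ‖d‖ + δ := by linarith [norm_le_norm_add_norm_sub d v, norm_sub_rev v d]
  have hscaled : ‖t⁻¹ • (y - (x + t • v))‖ ≤ δ / 2 := by
    rw [dist_self_add_right, norm_smul, Real.norm_of_nonneg ht.le, dist_eq_norm] at hy
    rw [norm_smul, norm_inv, Real.norm_of_nonneg ht.le, inv_mul_le_iff₀ ht]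
    calc ‖y - (x + t • v)‖ ≤ δ / 2 / (‖d‖ + δ) * (t * ‖v‖) := hy
      _ ≤ δ / 2 / (‖d‖ + δ) * (t * (‖d‖ + δ)) := by gcongr
      _ = t * (δ / 2) := by field_simp
  have hB' : v + t⁻¹ • (y - (x + t • v)) ∈ B := by
    refine hδB (mem_ball_iff_norm.2 ?_)
    rw [add_sub_right_comm]
    exact (norm_add_le _ _).trans_lt (by linarith)
  have hyU : x + t • (v + t⁻¹ • (y - (x + t • v))) ∈ U := hTB (Set.mk_mem_prod htT hB')
  rwa [smul_add, smul_inv_smul₀ ht.ne', ← add_assoc, add_sub_cancel] at hyU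

lemma eventually_dirNhds_lt_of_fderiv_neg {F : E → ℝ} {F' : StrongDual ℝ E}
    (hF : HasFDerivAt F F' x) (hd : F' d < 0) : ∀ᶠ z in dirNhds x d, F z < F x := by
  have hpos : ∀ᶠ s : ℝ × E in 𝓝[>] 0 ×ˢ 𝓝 d, 0 < s.1 := tendsto_fst self_mem_nhdsWithin
  have hslope : Tendsto (fun s : ℝ × E => s.1⁻¹ • (F (x + s.1 • s.2) - F x))
      (𝓝[>] 0 ×ˢ 𝓝 d) (𝓝 (F' d)) := by
    refine hF.hasFDerivWithinAt.lim (s := Set.univ) tendsto_smul_nhdsGT_prod_nhds (by simp) ?_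
    exact tendsto_snd.congr' (hpos.mono fun s hs => (inv_smul_smul₀ hs.ne' s.2).symm)
  rw [dirNhds, eventually_map]
  filter_upwards [hslope.eventually_lt_const hd, hpos] with s hs ht
  exact sub_neg.1 (neg_of_mul_neg_right hs (inv_pos.2 ht).le)

lemma exists_seq_of_frequently_dirNhds {p : E → Prop} (h : ∃ᶠ z in dirNhds x d, p z) :
    ∃ (v : ℕ → E) (t : ℕ → ℝ), Tendsto v atTop (𝓝 d) ∧ (∀ k, 0 < t k) ∧
      Tendsto t atTop (𝓝 0) ∧ ∀ k, p (x + t k • v k) := by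
  rw [dirNhds, frequently_map] at h
  have hpos : ∀ᶠ s : ℝ × E in 𝓝[>] 0 ×ˢ 𝓝 d, 0 < s.1 := tendsto_fst self_mem_nhdsWithin
  obtain ⟨s, hs, hps⟩ := exists_seq_forall_of_frequently (h.and_eventually hpos)
  exact ⟨fun k => (s k).2, fun k => (s k).1, tendsto_snd.comp hs, fun k => (hps k).2,
    tendsto_nhds_of_tendsto_nhdsWithin (tendsto_fst.comp hs), fun k => (hps k).1⟩

end DirectionalNeighbourhoods

section VariationalPrinciple

lemma exists_forall_le_add_mul_dist {X : Type*} [PseudoMetricSpace X] [ProperSpace X]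
    {r : X → ℝ} (hr : Continuous r) (hr0 : ∀ x, 0 ≤ r x) {ε : ℝ} (hε : 0 < ε) (z : X) :
    ∃ x, r x + ε * dist x z ≤ r z ∧ ∀ y, r x ≤ r y + ε * dist y x := by
  have hcoercive : Tendsto (fun y => r y + ε * dist y z) (cocompact X) atTop :=
    tendsto_atTop_mono (fun y => le_add_of_nonneg_left (hr0 y))
      ((tendsto_dist_right_cocompact_atTop z).const_mul_atTop hε)
  obtain ⟨x, hx⟩ := Continuous.exists_forall_le' (f := fun y => r y + ε * dist y z) (by fun_prop) z
    (hcoercive.eventually_ge_atTop _)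
  refine ⟨x, by simpa using hx z, fun y => ?_⟩
  have htriangle : ε * dist y z ≤ ε * dist y x + ε * dist x z := by
    rw [← mul_add]
    gcongr
    exact dist_triangle y x z
  linarith [hx y]

lemma norm_fderiv_le_of_forall_le_add_mul_norm {E : Type*} [NormedAddCommGroup E]
    [NormedSpace ℝ E] {r : E → ℝ} {r' : StrongDual ℝ E} {x : E} {c : ℝ} (hr : HasFDerivAt r r' x)
    (hc : 0 ≤ c) (h : ∀ y, r x ≤ r y + c * ‖y - x‖) : ‖r'‖ ≤ c := by
  have hlower : ∀ v, -(c * ‖v‖) ≤ r' v := fun v => by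
    refine ge_of_tendsto (hr.hasLineDerivAt v).tendsto_slope_zero_right ?_
    filter_upwards [self_mem_nhdsWithin] with t ht
    have hxt := h (x + t • v)
    rw [add_sub_cancel_left, norm_smul, Real.norm_of_nonneg (le_of_lt ht)] at hxt
    rw [smul_eq_mul, le_inv_mul_iff₀ ht]
    linarith
  refine r'.opNorm_le_bound hc fun v => abs_le.2 ⟨hlower v, ?_⟩
  simpa using neg_le_neg (hlower (-v))

end VariationalPrinciple

section SecondOrderExpansion

lemma tendsto_sub_sub_div_sq_of_hasDerivAt {φ φ' : ℝ → ℝ} {a : ℝ}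
    (hφ : ∀ᶠ t in 𝓝 0, HasDerivAt φ (φ' t) t) (hφ' : HasDerivAt φ' a 0) :
    Tendsto (fun t => (φ t - φ 0 - t * φ' 0) / t ^ 2) (𝓝[>] 0) (𝓝 (a / 2)) := by
  have hφ_cont : ContinuousAt φ 0 := hφ.self_of_nhds.continuousAt
  refine HasDerivAt.lhopital_zero_nhdsGT (f' := fun t => φ' t - φ' 0) (g' := fun t => 2 * t)
    ?_ ?_ ?_ ?_ ?_ ?_
  · filter_upwards [hφ.filter_mono inf_le_left] with t ht
    simpa using (ht.sub_const (φ 0)).fun_sub ((hasDerivAt_id t).mul_const (φ' 0))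
  · exact .of_forall fun t => by simpa using hasDerivAt_pow 2 t
  · filter_upwards [self_mem_nhdsWithin] with t ht
    exact mul_ne_zero two_ne_zero (ne_of_gt ht)
  · refine Tendsto.mono_left ?_ inf_le_left
    have hcont : ContinuousAt (fun t => φ t - φ 0 - t * φ' 0) 0 := by fun_prop
    simpa using hcont.tendsto
  · exact Tendsto.mono_left (by simpa using (continuous_pow (M := ℝ) 2).tendsto 0) inf_le_left
  · refine (hφ'.tendsto_slope_zero_right.div_const 2).congr fun t => ?_
    rw [zero_add, smul_eq_mul]
    ring

variable {E : Type*} [NormedAddCommGroup E] [NormedSpace ℝ E] {x d : E}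

/-- The parabolic arc through `x` with velocity `d` and acceleration `2 • w`, along which
second-order conditions are tested. -/
def parabolicArc (x d w : E) (t : ℝ) : E := x + t • d + t ^ 2 • w

lemma hasDerivAt_parabolicArc (x d w : E) (t : ℝ) :
    HasDerivAt (parabolicArc x d w) (d + (2 * t) • w) t := by
  unfold parabolicArc
  simpa using (((hasDerivAt_id t).smul_const d).const_add x).fun_add
    ((hasDerivAt_pow 2 t).smul_const w)

lemma parabolicArc_zero (x d w : E) : parabolicArc x d w 0 = x := by
  simp [parabolicArc]

lemma tendsto_parabolicArc_dirNhds (x d w : E) :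
    Tendsto (parabolicArc x d w) (𝓝[>] 0) (dirNhds x d) := by
  have hvel : Tendsto (fun t : ℝ => d + t • w) (𝓝[>] 0) (𝓝 d) :=
    Tendsto.mono_left (Continuous.tendsto' (by fun_prop) 0 d (by simp)) inf_le_left
  refine (tendsto_dirNhds tendsto_id hvel).congr fun t => ?_
  rw [parabolicArc, id, smul_add, smul_smul, ← sq, add_assoc]

lemma tendsto_sub_sub_div_sq_parabolicArc {F : E → ℝ} {F' : E → StrongDual ℝ E}
    {F'' : E →L[ℝ] StrongDual ℝ E} (hF : ∀ y, HasFDerivAt F (F' y) y)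
    (hF' : HasFDerivAt F' F'' x) (w : E) :
    Tendsto (fun t => (F (parabolicArc x d w t) - F x - t * F' x d) / t ^ 2) (𝓝[>] 0)
      (𝓝 (F' x w + F'' d d / 2)) := by
  have hvel : HasDerivAt (fun t : ℝ => d + (2 * t) • w) ((2 : ℝ) • w) 0 := by
    simpa using (((hasDerivAt_id (0 : ℝ)).const_mul 2).smul_const w).const_add d
  have hderiv : HasDerivAt (fun t => F' (parabolicArc x d w t)) (F'' d) 0 := by
    have harc := hasDerivAt_parabolicArc x d w 0
    rw [← parabolicArc_zero x d w] at hF'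
    simpa [Function.comp_def] using hF'.comp_hasDerivAt 0 harc
  convert! tendsto_sub_sub_div_sq_of_hasDerivAt
    (.of_forall fun t => (hF _).comp_hasDerivAt t (hasDerivAt_parabolicArc x d w t))
    (hderiv.clm_apply hvel) using 2
  · simp [parabolicArc_zero]
  · simp only [mul_zero, zero_smul, add_zero, parabolicArc_zero, map_smul, smul_eq_mul]
    ring

end SecondOrderExpansion

section MultiplierExistence

variable {V E : Type*} [NormedAddCommGroup V] [NormedSpace ℝ V] [NormedAddCommGroup E]
  [NormedSpace ℝ E]

lemma exists_forall_affine_nonneg {Λ : Set V} (hΛ : IsCompact Λ) (hΛc : Convex ℝ Λ)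
    (A : V →L[ℝ] StrongDual ℝ E) (b : StrongDual ℝ V) (a : StrongDual ℝ E) (α : ℝ)
    (h : ∀ w, ∃ l ∈ Λ, 0 ≤ a w + A l w + (α + b l)) :
    ∃ l ∈ Λ, ∀ w, 0 ≤ a w + A l w + (α + b l) := by
  let φ : V → E → ℝ := fun l w => -(a w + A l w + (α + b l))
  have hφ_left : ∀ w, (φ · w) = fun l => (-(A.flip w + b)) l + -(a w + α) := fun w => by
    ext l
    simp only [neg_add_rev, add_apply, neg_apply, ContinuousLinearMap.flip_apply, φ]
    ring
  have hφ_right : ∀ l, φ l = fun w => (-(a + A l)) w + -(α + b l) := fun l => by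
    ext w
    simp only [neg_add_rev, add_apply, neg_apply, φ]
    ring
  have hfinite : ∀ u : Finset E, (Λ ∩ ⋂ w ∈ u, {l | φ l w ≤ 0}).Nonempty := fun u => by
    by_contra! hu
    have hΛne : Λ.Nonempty := (h 0).imp fun _ => And.left
    obtain ⟨w, -, hw⟩ := Sion.exists_lt_iInf_of_lt_iInf_of_finite (X := Λ) (Y := Set.univ)
      (f := φ) (t := 0) hΛne hΛ
      (fun w _ => by
        rw [hφ_left]
        exact (by fun_prop : Continuous _).lowerSemicontinuous.lowerSemicontinuousOn _)
      (fun w _ => by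
        rw [hφ_left]
        exact (((-(A.flip w + b)).toLinearMap.convexOn hΛc).add_const _).quasiconvexOn)
      convex_univ
      (fun l _ => by
        rw [hφ_right]
        exact (by fun_prop : Continuous _).upperSemicontinuous.upperSemicontinuousOn _)
      (fun l _ => by
        rw [hφ_right]
        exact (((-(a + A l)).toLinearMap.concaveOn convex_univ).add_const _).quasiconcaveOn)
      hΛc u.finite_toSet (Set.subset_univ _) (fun l hl => by
        by_contra! hl'
        exact Set.eq_empty_iff_forall_notMem.1 hu l ⟨hl, by simpa using hl'⟩)
    obtain ⟨l, hl, hlw⟩ := h w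
    exact (hw l hl).not_ge (neg_nonpos.2 hlw)
  obtain ⟨l, hl, hlw⟩ := hΛ.inter_iInter_nonempty (fun w => {l | φ l w ≤ 0})
    (fun w => isClosed_le (by rw [hφ_left]; fun_prop) continuous_const) hfinite
  exact ⟨l, hl, fun w => neg_nonpos.1 (Set.mem_iInter.1 hlw w)⟩

lemma exists_stationary_of_forall_exists_nonneg {Λ : Set V} (hΛ : IsCompact Λ)
    (hΛc : Convex ℝ Λ) (A : V →L[ℝ] StrongDual ℝ E) (b : StrongDual ℝ V) (a : StrongDual ℝ E)
    (α : ℝ) (h : ∀ w, ∃ l ∈ Λ, 0 ≤ a w + A l w + (α + b l)) :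
    ∃ l ∈ Λ, a + A l = 0 ∧ 0 ≤ α + b l := by
  obtain ⟨l, hl, hlw⟩ := exists_forall_affine_nonneg hΛ hΛc A b a α h
  refine ⟨l, hl, ?_, by simpa using hlw 0⟩
  ext w
  by_contra hw
  have hscaled := hlw (((-(α + b l) - 1) / (a + A l) w) • w)
  rw [← add_apply, map_smul, smul_eq_mul, div_mul_cancel₀ _ hw] at hscaled
  linarith

end MultiplierExistence

/-- A finite system of smooth constraints on `E`: the constraint `i` reads `c i x ≤ 0` if
`i ∈ ineq` and `c i x = 0` otherwise. -/
structure ConstraintSystem (ι E : Type*) [NormedAddCommGroup E] [NormedSpace ℝ E] where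
  ineq : Set ι
  c : ι → E → ℝ
  c' : ι → E → StrongDual ℝ E
  hasFDerivAt_c : ∀ i x, HasFDerivAt (c i) (c' i x) x
  continuous_c' : ∀ i, Continuous (c' i)

namespace ConstraintSystem

variable {ι E : Type*} [NormedAddCommGroup E] [NormedSpace ℝ E] (S : ConstraintSystem ι E)

/-- The amount by which the value `s` of the constraint `i` violates it, with its sign: the
positive part of `s` for an inequality, `s` itself for an equation. -/
def excess (i : ι) (s : ℝ) : ℝ := if i ∈ S.ineq then max s 0 else s

/-- The solution set of the constraint system. -/
def feasible : Set E := {x | ∀ i, S.excess i (S.c i x) = 0}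

/-- The linearization cone of the constraint system at `x`. -/
def linCone (x : E) : Set E :=
  {d | (∀ i ∈ S.ineq, S.c i x = 0 → S.c' i x d ≤ 0) ∧ ∀ i ∉ S.ineq, S.c' i x d = 0}

/-- The constraints active at `x` whose linearization is active in direction `d`. -/
def activeDir (x d : E) : Set ι := {i | S.c i x = 0 ∧ S.c' i x d = 0}

/-- The multipliers admissible in direction `d` at `x`: nonnegative on inequalities and supported
on the constraints active in direction `d`. -/
def multiplierCone (x d : E) : Set (EuclideanSpace ℝ ι) :=
  {l | (∀ i ∈ S.ineq, 0 ≤ l i) ∧ ∀ i ∉ S.activeDir x d, l i = 0}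

/-- The Euclidean projection of the vector `s` onto the multiplier cone. -/
def multiplierProj (x d : E) (s : ι → ℝ) : EuclideanSpace ℝ ι :=
  WithLp.toLp 2 fun i => if i ∈ S.activeDir x d then S.excess i (s i) else 0

section Excess

variable {S} {i : ι} {s : ℝ}

lemma continuous_excess : Continuous (S.excess i) := by
  unfold excess
  split_ifs <;> fun_prop

lemma excess_mul_of_nonneg {a : ℝ} (ha : 0 ≤ a) : S.excess i (a * s) = a * S.excess i s := by
  unfold excess
  split_ifs
  · rw [mul_max_of_nonneg _ _ ha, mul_zero]
  · rfl

lemma excess_eq_self (h : S.excess i s ≠ 0) : S.excess i s = s := by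
  unfold excess at h ⊢
  split_ifs at h ⊢ with hi
  · exact max_eq_left (le_of_lt (by simpa using h))
  · rfl

lemma excess_nonneg (hi : i ∈ S.ineq) : 0 ≤ S.excess i s := by
  simp only [excess, if_pos hi, le_max_right]

lemma excess_mul_self : S.excess i s * s = S.excess i s ^ 2 := by
  by_cases h : S.excess i s = 0
  · simp [h]
  · rw [sq]
    nth_rw 3 [excess_eq_self h]

lemma excess_eq_zero (hi : i ∈ S.ineq) : S.excess i s = 0 ↔ s ≤ 0 := by
  simp only [excess, if_pos hi, max_eq_right_iff]

lemma excess_of_notMem (hi : i ∉ S.ineq) : S.excess i s = s := if_neg hi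

lemma hasDerivAt_excess_sq : HasDerivAt (fun s => S.excess i s ^ 2) (2 * S.excess i s) s := by
  have hquad : ∀ u, |S.excess i u ^ 2 - S.excess i s ^ 2 - 2 * S.excess i s * (u - s)|
      ≤ (u - s) ^ 2 := fun u => by
    unfold excess
    split_ifs
    · rw [abs_le]
      rcases max_cases u 0 with ⟨hu, _⟩ | ⟨hu, _⟩ <;>
        rcases max_cases s 0 with ⟨hs, _⟩ | ⟨hs, _⟩ <;>
        rw [hu, hs] <;> constructor <;> nlinarith
    · rw [abs_le]
      constructor <;> nlinarith [sq_nonneg (u - s)]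
  rw [hasDerivAt_iff_isLittleO]
  refine Asymptotics.IsBigO.trans_isLittleO (.of_bound 1 (.of_forall fun u => ?_))
    (Asymptotics.isLittleO_pow_sub_sub s one_lt_two)
  rw [smul_eq_mul, mul_comm (u - s), one_mul, Real.norm_eq_abs, norm_pow, norm_norm,
    Real.norm_eq_abs, sq_abs]
  exact hquad u

end Excess

section Linearization

variable {S} {x d : E} {i : ι}

lemma eventually_dirNhds_excess_eq_zero (hx : x ∈ S.feasible) (hd : d ∈ S.linCone x)
    (hi : i ∉ S.activeDir x d) : ∀ᶠ z in dirNhds x d, S.excess i (S.c i z) = 0 := by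
  have hineq : i ∈ S.ineq := by
    by_contra h
    exact hi ⟨by simpa only [excess_of_notMem h] using hx i, hd.2 i h⟩
  simp only [excess_eq_zero hineq]
  obtain hneg | hzero := ((excess_eq_zero hineq).1 (hx i)).lt_or_eq
  · exact ((S.hasFDerivAt_c i x).continuousAt.eventually_lt_const hneg).filter_mono
      dirNhds_le_nhds |>.mono fun _ => le_of_lt
  · have hdesc : S.c' i x d < 0 := (hd.1 i hineq hzero).lt_of_ne fun h => hi ⟨hzero, h⟩
    filter_upwards [eventually_dirNhds_lt_of_fderiv_neg (S.hasFDerivAt_c i x) hdesc] with z hz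
    exact (hz.trans_eq hzero).le

lemma convex_multiplierCone : Convex ℝ (S.multiplierCone x d) := by
  rintro l ⟨hl, hl0⟩ k ⟨hk, hk0⟩ a b ha hb -
  refine ⟨fun i hi => ?_, fun i hi => ?_⟩
  · simpa using add_nonneg (mul_nonneg ha (hl i hi)) (mul_nonneg hb (hk i hi))
  · simp [hl0 i hi, hk0 i hi]

lemma isClosed_multiplierCone : IsClosed (S.multiplierCone x d) := by
  simp only [multiplierCone, Set.ofPred_and, Set.ofPred_forall]
  refine .inter ?_ ?_
  · exact isClosed_iInter fun i => isClosed_iInter fun _ => isClosed_le (by fun_prop) (by fun_prop)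
  · exact isClosed_iInter fun i => isClosed_iInter fun _ => isClosed_eq (by fun_prop) (by fun_prop)

lemma smul_mem_multiplierCone {l : EuclideanSpace ℝ ι} (hl : l ∈ S.multiplierCone x d) {a : ℝ}
    (ha : 0 ≤ a) : a • l ∈ S.multiplierCone x d :=
  ⟨fun i hi => mul_nonneg ha (hl.1 i hi), fun i hi => by simp [hl.2 i hi]⟩

lemma multiplierProj_mem (s : ι → ℝ) : S.multiplierProj x d s ∈ S.multiplierCone x d := by
  refine ⟨fun i hi => ?_, fun i hi => if_neg hi⟩
  simp only [multiplierProj]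
  split_ifs
  exacts [excess_nonneg hi, le_rfl]

end Linearization

variable [Fintype ι]

/-- The vector of all constraint violations at `x`. -/
def violation (x : E) : EuclideanSpace ℝ ι := WithLp.toLp 2 fun i => S.excess i (S.c i x)

/-- The Euclidean length of the violation, which measures how far `x` is from being feasible. -/
def residual (x : E) : ℝ := ‖S.violation x‖

/-- The violation scaled to length one; it is `0` at feasible points. -/
def unitViolation (x : E) : EuclideanSpace ℝ ι := (S.residual x)⁻¹ • S.violation x

/-- The transpose of the Jacobian of the constraints at `x`, which maps a multiplier `l` to
`∑ i, l i • c' i x`. -/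
def adjointDeriv (x : E) : EuclideanSpace ℝ ι →L[ℝ] StrongDual ℝ E :=
  ∑ i, (EuclideanSpace.proj i).smulRight (S.c' i x)

/-- Quasi-normality at `x` in direction `d`: no nonzero admissible multiplier `l` annihilates the
constraint gradients while its sign agrees with that of the constraints on its support, at points
approaching `x` from direction `d`. -/
def QuasiNormalDir (x d : E) : Prop :=
  ∀ l ∈ S.multiplierCone x d, S.adjointDeriv x l = 0 →
    (∃ᶠ z in dirNhds x d, ∀ i, l i ≠ 0 → 0 < l i * S.c i z) → l = 0

/-- Metric subregularity of the constraint system at `x` in direction `d`: a local error bound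
which is only required on directional neighbourhoods. -/
def MetricSubregularDir (x d : E) : Prop :=
  ∃ κ ≥ 0, ∀ᶠ z in dirNhds x d, ∃ y ∈ S.feasible, dist y z ≤ κ * S.residual z

variable {S} {x d : E}

lemma adjointDeriv_apply (l : EuclideanSpace ℝ ι) :
    S.adjointDeriv x l = ∑ i, l i • S.c' i x := by
  simp [adjointDeriv]

section Residual

lemma continuous_adjointDeriv_apply :
    Continuous fun q : EuclideanSpace ℝ ι × E => S.adjointDeriv q.2 q.1 := by
  have hc' := S.continuous_c'
  simp only [adjointDeriv_apply]
  fun_prop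

lemma continuous_residual : Continuous S.residual := by
  have hc : ∀ i, Continuous (S.c i) := fun i =>
    continuous_iff_continuousAt.2 fun x => (S.hasFDerivAt_c i x).continuousAt
  refine (PiLp.continuous_toLp 2 _ |>.comp ?_).norm
  exact continuous_pi fun i => continuous_excess.comp (hc i)

lemma residual_nonneg (x : E) : 0 ≤ S.residual x := norm_nonneg _

lemma residual_eq_zero : S.residual x = 0 ↔ x ∈ S.feasible := by
  simp [residual, violation, feasible, funext_iff, WithLp.ext_iff]

lemma norm_unitViolation (hx : x ∉ S.feasible) : ‖S.unitViolation x‖ = 1 :=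
  norm_smul_inv_norm (residual_eq_zero.not.2 hx |> norm_ne_zero_iff.1)

lemma hasFDerivAt_residual (hx : x ∉ S.feasible) :
    HasFDerivAt S.residual (S.adjointDeriv x (S.unitViolation x)) x := by
  have hsq : ∀ z, S.residual z = √(∑ i, S.excess i (S.c i z) ^ 2) := fun z => by
    simp [residual, violation, EuclideanSpace.norm_eq]
  have hsum_ne : ∑ i, S.excess i (S.c i x) ^ 2 ≠ 0 := fun h =>
    residual_eq_zero.not.2 hx (by rw [hsq, h, Real.sqrt_zero])
  have hsum : HasFDerivAt (fun z => ∑ i, S.excess i (S.c i z) ^ 2)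
      (∑ i, (2 * S.excess i (S.c i x)) • S.c' i x) x := .fun_sum fun i _ =>
    hasDerivAt_excess_sq.comp_hasFDerivAt x (S.hasFDerivAt_c i x)
  have hderiv : S.adjointDeriv x (S.unitViolation x) =
      (1 / (2 * S.residual x)) • ∑ i, (2 * S.excess i (S.c i x)) • S.c' i x := by
    rw [adjointDeriv_apply, Finset.smul_sum]
    refine Finset.sum_congr rfl fun i _ => ?_
    rw [smul_smul]
    congr 1
    simp only [unitViolation, violation, PiLp.smul_apply, smul_eq_mul, one_div, mul_inv_rev]
    field_simp
  rw [hderiv, hsq x, funext hsq]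
  exact hsum.sqrt hsum_ne

end Residual

section ErrorBound

lemma mem_multiplierCone_of_tendsto_unitViolation {𝓕 : Filter E} [𝓕.NeBot]
    (hx : x ∈ S.feasible) (hd : d ∈ S.linCone x) (h𝓕 : 𝓕 ≤ dirNhds x d)
    {l : EuclideanSpace ℝ ι} (hl : Tendsto S.unitViolation 𝓕 (𝓝 l)) :
    l ∈ S.multiplierCone x d := by
  have hcoord : ∀ i, Tendsto (fun z => S.unitViolation z i) 𝓕 (𝓝 (l i)) := fun i =>
    ((EuclideanSpace.proj (𝕜 := ℝ) i).continuous.tendsto l).comp hl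
  refine ⟨fun i hi => ge_of_tendsto' (hcoord i) fun z => ?_, fun i hi => ?_⟩
  · exact mul_nonneg (inv_nonneg.2 (residual_nonneg z)) (excess_nonneg hi)
  · refine tendsto_nhds_unique (hcoord i) (tendsto_const_nhds.congr' ?_)
    filter_upwards [h𝓕 (eventually_dirNhds_excess_eq_zero hx hd hi)] with z hz
    simp [unitViolation, violation, hz]

lemma eventually_mul_pos_of_tendsto_unitViolation {𝓕 : Filter E} {l : EuclideanSpace ℝ ι}
    (hl : Tendsto S.unitViolation 𝓕 (𝓝 l)) :
    ∀ᶠ z in 𝓕, ∀ i, l i ≠ 0 → 0 < l i * S.c i z := by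
  refine eventually_all.2 fun i => eventually_imp_distrib_left.2 fun hi => ?_
  have hcoord : Tendsto (fun z => l i * S.unitViolation z i) 𝓕 (𝓝 (l i * l i)) :=
    (((EuclideanSpace.proj (𝕜 := ℝ) i).continuous.tendsto l).comp hl).const_mul (l i)
  filter_upwards [hcoord.eventually_const_lt (mul_self_pos.2 hi)] with z hz
  have hexcess : 0 < (S.residual z)⁻¹ * (l i * S.excess i (S.c i z)) := by
    simpa [unitViolation, violation, mul_left_comm] using hz
  have hpos := pos_of_mul_pos_right hexcess (inv_nonneg.2 (residual_nonneg z))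
  rwa [excess_eq_self (right_ne_zero_of_mul hpos.ne')] at hpos

lemma MetricSubregularDir.exists_exact_penalty {f : E → ℝ} {K : NNReal} {s : Set E}
    (h : S.MetricSubregularDir x d) (hx : x ∈ S.feasible) (hf : LipschitzOnWith K f s)
    (hs : s ∈ 𝓝 x) (hmin : IsLocalMinOn f S.feasible x) :
    ∃ κ ≥ 0, ∀ᶠ z in dirNhds x d, f x ≤ f z + κ * S.residual z := by
  obtain ⟨κ, hκ, hκz⟩ := h
  refine ⟨K * κ, by positivity, ?_⟩
  obtain ⟨δ, hδ, hδs⟩ := Metric.mem_nhds_iff.1 (inter_mem hs (eventually_nhdsWithin_iff.1 hmin))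
  have hclose : ∀ᶠ z in dirNhds x d, κ * S.residual z + dist z x < δ := by
    have hcont : Continuous fun z => κ * S.residual z + dist z x :=
      (continuous_residual.const_mul κ).add (continuous_id.dist continuous_const)
    refine (hcont.tendsto x |>.eventually_lt_const ?_).filter_mono dirNhds_le_nhds
    simpa [residual_eq_zero.2 hx] using hδ
  filter_upwards [hκz, hclose] with z ⟨y, hy, hyz⟩ hz
  have hres := mul_nonneg hκ (residual_nonneg (S := S) z)
  have hzs := (hδs (Metric.mem_ball.2 (show dist z x < δ by linarith))).1
  have hys := hδs (Metric.mem_ball.2 ((dist_triangle y z x).trans_lt (by linarith)))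
  calc f x ≤ f y := hys.2 hy
    _ ≤ f z + K * dist y z := hf.le_add_mul hys.1 hzs
    _ ≤ f z + K * κ * S.residual z := by
      rw [mul_assoc]
      gcongr

variable [ProperSpace E]

/- If the error bound fails near `z`, Ekeland's principle yields an infeasible point at which the
derivative of the residual is small; it is so close to `z` that it still lies in a directional
neighbourhood. -/
lemma mapClusterPt_zero_of_not_metricSubregularDir (hx : x ∈ S.feasible)
    (h : ¬ S.MetricSubregularDir x d) :
    MapClusterPt 0 (dirNhds x d ⊓ 𝓟 S.feasibleᶜ)
      fun z => S.adjointDeriv z (S.unitViolation z) := by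
  simp only [MetricSubregularDir, not_exists, not_and, not_eventually, not_le] at h
  refine Metric.nhds_basis_closedBall.mapClusterPt_iff_frequently.2 fun η hη => ?_
  refine frequently_inf_principal.2 (frequently_iff.2 fun {U} hU => ?_)
  obtain ⟨δ, hδ, hδU⟩ := exists_eventually_dirNhds_forall_dist_le hU
  obtain ⟨ε, hε, hεδη⟩ : ∃ ε > 0, ε ≤ min δ (min η 1) := ⟨_, by positivity, le_rfl⟩
  obtain ⟨hεδ, hεη, hε1⟩ := le_min_iff.1 hεδη |>.imp_right le_min_iff.1
  obtain ⟨z, hz, hzU⟩ := ((h (ε⁻¹ ^ 2) (by positivity)).and_eventually hδU).exists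
  obtain ⟨y, hyz, hy⟩ :=
    exists_forall_le_add_mul_dist (continuous_residual (S := S)) residual_nonneg hε z
  have hfar : ∀ w ∈ S.feasible, S.residual z < ε ^ 2 * dist w z := fun w hw => by
    rw [← inv_mul_lt_iff₀ (by positivity), ← inv_pow]
    exact hz w hw
  have hnear : ε * dist y z < ε * (ε * dist x z) := by
    linarith [hfar x hx, residual_nonneg (S := S) y]
  have hyU : y ∈ U := hzU y <| (lt_of_mul_lt_mul_left hnear hε.le).le.trans (by gcongr)
  have hy_infeasible : y ∉ S.feasible := fun hyf => by
    have hle : ε ^ 2 * dist y z ≤ ε * dist y z := by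
      gcongr
      exact pow_le_of_le_one hε.le hε1 two_ne_zero
    linarith [hfar y hyf, residual_nonneg (S := S) y]
  refine ⟨y, hyU, hy_infeasible, mem_closedBall_zero_iff.2 (le_trans ?_ hεη)⟩
  exact norm_fderiv_le_of_forall_le_add_mul_norm (hasFDerivAt_residual hy_infeasible) hε.le
    fun w => by simpa only [dist_eq_norm] using hy w

lemma QuasiNormalDir.metricSubregularDir (h : S.QuasiNormalDir x d) (hx : x ∈ S.feasible)
    (hd : d ∈ S.linCone x) : S.MetricSubregularDir x d := by
  by_contra hsub
  obtain ⟨𝒰, h𝒰, hstat⟩ :=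
    mapClusterPt_iff_ultrafilter.1 (mapClusterPt_zero_of_not_metricSubregularDir hx hsub)
  obtain ⟨h𝒰d, h𝒰f⟩ := le_inf_iff.1 h𝒰
  have hsphere : ∀ᶠ z in (𝒰 : Filter E), S.unitViolation z ∈ Metric.sphere 0 1 := by
    filter_upwards [le_principal_iff.1 h𝒰f] with z hz
    exact mem_sphere_zero_iff_norm.2 (norm_unitViolation hz)
  obtain ⟨l, hl, hlim⟩ := (isCompact_sphere 0 1).ultrafilter_le_nhds (𝒰.map S.unitViolation)
    (le_principal_iff.2 hsphere)
  have hlim' : Tendsto S.unitViolation 𝒰 (𝓝 l) := hlim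
  have hl0 : S.adjointDeriv x l = 0 := tendsto_nhds_unique
    ((continuous_adjointDeriv_apply.tendsto (l, x)).comp
      (hlim'.prodMk_nhds (h𝒰d.trans dirNhds_le_nhds))) hstat
  have hzero : l = 0 := h l (mem_multiplierCone_of_tendsto_unitViolation hx hd h𝒰d hlim') hl0
    ((eventually_mul_pos_of_tendsto_unitViolation hlim').frequently.filter_mono h𝒰d)
  exact Metric.ne_of_mem_sphere hl one_ne_zero hzero

end ErrorBound

section SecondOrder

lemma sum_multiplierProj_mul (s : ι → ℝ) :
    ∑ i, S.multiplierProj x d s i * s i = ‖S.multiplierProj x d s‖ ^ 2 := by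
  rw [EuclideanSpace.real_norm_sq_eq]
  refine Finset.sum_congr rfl fun i _ => ?_
  simp only [multiplierProj]
  split_ifs
  exacts [excess_mul_self, by simp]

lemma exists_mem_multiplierCone_sum_mul_eq {κ : ℝ} (hκ : 0 ≤ κ) (s : ι → ℝ) :
    ∃ l ∈ S.multiplierCone x d ∩ Metric.closedBall 0 κ,
      ∑ i, l i * s i = κ * ‖S.multiplierProj x d s‖ := by
  set v := S.multiplierProj x d s with hv
  refine ⟨(κ * ‖v‖⁻¹) • v, ⟨smul_mem_multiplierCone (multiplierProj_mem s) (by positivity), ?_⟩, ?_⟩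
  · rw [mem_closedBall_zero_iff, norm_smul, Real.norm_of_nonneg (by positivity), mul_assoc]
    exact mul_le_of_le_one_right hκ inv_mul_le_one
  · simp only [PiLp.smul_apply, smul_eq_mul, mul_assoc, ← Finset.mul_sum]
    rw [hv, sum_multiplierProj_mul, ← hv, sq]
    by_cases h0 : ‖v‖ = 0
    · simp [h0]
    · rw [inv_mul_cancel_left₀ h0]

lemma tendsto_residual_parabolicArc_div_sq {c'' : ι → E →L[ℝ] StrongDual ℝ E}
    (hx : x ∈ S.feasible) (hd : d ∈ S.linCone x) (hc'' : ∀ i, HasFDerivAt (S.c' i) (c'' i) x)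
    (w : E) :
    Tendsto (fun t => S.residual (parabolicArc x d w t) / t ^ 2) (𝓝[>] 0)
      (𝓝 ‖S.multiplierProj x d fun i => S.c' i x w + c'' i d d / 2‖) := by
  have hviolation : Tendsto (fun t => (t ^ 2)⁻¹ • S.violation (parabolicArc x d w t)) (𝓝[>] 0)
      (𝓝 (S.multiplierProj x d fun i => S.c' i x w + c'' i d d / 2)) := by
    refine (PiLp.continuous_toLp 2 _).tendsto _ |>.comp (tendsto_pi_nhds.2 fun i => ?_)
    split_ifs with hi
    · refine (continuous_excess.tendsto _ |>.comp
        (tendsto_sub_sub_div_sq_parabolicArc (d := d) (S.hasFDerivAt_c i) (hc'' i) w)).congr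
          fun t => ?_
      simp only [Function.comp, hi.1, hi.2, mul_zero, sub_zero, div_eq_inv_mul]
      exact excess_mul_of_nonneg (by positivity)
    · refine tendsto_const_nhds.congr' ?_
      filter_upwards [tendsto_parabolicArc_dirNhds x d w
        (eventually_dirNhds_excess_eq_zero hx hd hi)] with t ht
      have hz : S.excess i (S.c i (parabolicArc x d w t)) = 0 := ht
      simp [violation, hz]
  refine hviolation.norm.congr fun t => ?_
  rw [norm_smul, Real.norm_of_nonneg (by positivity), residual, div_eq_inv_mul]

lemma nonneg_of_eventually_exact_penalty {f : E → ℝ} {f' : E → StrongDual ℝ E}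
    {f'' : E →L[ℝ] StrongDual ℝ E} {c'' : ι → E →L[ℝ] StrongDual ℝ E} {κ : ℝ}
    (hx : x ∈ S.feasible) (hd : d ∈ S.linCone x) (hfd : f' x d ≤ 0)
    (hf : ∀ y, HasFDerivAt f (f' y) y) (hf'' : HasFDerivAt f' f'' x)
    (hc'' : ∀ i, HasFDerivAt (S.c' i) (c'' i) x)
    (hκ : ∀ᶠ z in dirNhds x d, f x ≤ f z + κ * S.residual z) (w : E) :
    0 ≤ f' x w + f'' d d / 2 +
      κ * ‖S.multiplierProj x d fun i => S.c' i x w + c'' i d d / 2‖ := by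
  refine ge_of_tendsto ((tendsto_sub_sub_div_sq_parabolicArc hf hf'' w).add
    ((tendsto_residual_parabolicArc_div_sq hx hd hc'' w).const_mul κ)) ?_
  filter_upwards [tendsto_parabolicArc_dirNhds x d w hκ, self_mem_nhdsWithin]
    with t ht (ht0 : 0 < t)
  have hpen : f x ≤ f (parabolicArc x d w t) + κ * S.residual (parabolicArc x d w t) := ht
  rw [mul_div_assoc', ← add_div]
  have hdesc : t * f' x d ≤ 0 := mul_nonpos_of_nonneg_of_nonpos ht0.le hfd
  exact div_nonneg (by linarith) (sq_nonneg t)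

variable [ProperSpace E]

theorem QuasiNormalDir.exists_second_order_multiplier {f : E → ℝ} {f' : E → StrongDual ℝ E}
    {f'' : E →L[ℝ] StrongDual ℝ E} {c'' : ι → E →L[ℝ] StrongDual ℝ E}
    (h : S.QuasiNormalDir x d) (hx : x ∈ S.feasible) (hd : d ∈ S.linCone x) (hfd : f' x d ≤ 0)
    (hf : ∀ y, HasFDerivAt f (f' y) y) (hf'' : HasFDerivAt f' f'' x)
    (hc'' : ∀ i, HasFDerivAt (S.c' i) (c'' i) x) (hmin : IsLocalMinOn f S.feasible x) :
    ∃ l ∈ S.multiplierCone x d,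
      f' x + S.adjointDeriv x l = 0 ∧ 0 ≤ f'' d d + ∑ i, l i * c'' i d d := by
  obtain ⟨K, s, hs, hK⟩ := (hasStrictFDerivAt_of_hasFDerivAt_of_continuousAt
    (.of_forall hf) hf''.continuousAt).exists_lipschitzOnWith
  obtain ⟨κ, hκ, hpen⟩ := (h.metricSubregularDir hx hd).exists_exact_penalty hx hK hs hmin
  obtain ⟨l, ⟨hl, -⟩, hstat, hsecond⟩ := exists_stationary_of_forall_exists_nonneg
    ((isCompact_closedBall 0 κ).inter_left (isClosed_multiplierCone (S := S) (x := x) (d := d)))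
    (convex_multiplierCone.inter (convex_closedBall 0 κ)) (S.adjointDeriv x)
    (∑ i, (c'' i d d / 2) • EuclideanSpace.proj i) (f' x) (f'' d d / 2) fun w => by
      obtain ⟨l, hl, hlw⟩ := exists_mem_multiplierCone_sum_mul_eq (S := S) (x := x) (d := d) hκ
        fun i => S.c' i x w + c'' i d d / 2
      refine ⟨l, hl, ?_⟩
      have hw := nonneg_of_eventually_exact_penalty hx hd hfd hf hf'' hc'' hpen w
      rw [← hlw] at hw
      refine hw.trans_eq ?_
      simp only [mul_add, Finset.sum_add_distrib, adjointDeriv_apply, FunLike.coe_sum,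
        Finset.sum_apply, FunLike.coe_smul, Pi.smul_apply, PiLp.proj_apply, smul_eq_mul, mul_comm]
      ring
  refine ⟨l, hl, hstat, ?_⟩
  have htwice : f'' d d + ∑ i, l i * c'' i d d =
      2 * (f'' d d / 2 + (∑ i, (c'' i d d / 2) • EuclideanSpace.proj (𝕜 := ℝ) i) l) := by
    simp only [mul_add, Finset.mul_sum, FunLike.coe_sum, Finset.sum_apply, FunLike.coe_smul,
      Pi.smul_apply, PiLp.proj_apply, smul_eq_mul]
    congr 1
    · ring
    · exact Finset.sum_congr rfl fun i _ => by ring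
  rw [htwice]
  exact mul_nonneg zero_le_two hsecond

end SecondOrder

end ConstraintSystem

namespace MPSC

open InnerProductSpace (toDual)

variable {n p q m : ℕ}

section Branch

variable {α β : Type*} (σ : Set (Fin m)) (g : Fin p → α) (h : Fin q → α) (G H : Fin m → α)

/-- The constraints of a branch of an MPSC, in which the switching constraint `i` is replaced by
`G i = 0` if `i ∈ σ` and by `H i = 0` otherwise. The type `α` is arbitrary so that the same
definition selects functions, gradients and Hessians. -/
def branch : Fin p ⊕ Fin q ⊕ Fin m → α := Sum.elim g (Sum.elim h (σ.piecewise G H))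

variable {σ g h G H}

@[simp] lemma branch_inl (i : Fin p) : branch σ g h G H (.inl i) = g i := rfl

@[simp] lemma branch_inr_inl (j : Fin q) : branch σ g h G H (.inr (.inl j)) = h j := rfl

@[simp] lemma branch_inr_inr_of_mem {i : Fin m} (hi : i ∈ σ) :
    branch σ g h G H (.inr (.inr i)) = G i :=
  Set.piecewise_eq_of_mem _ _ _ hi

@[simp] lemma branch_inr_inr_of_notMem {i : Fin m} (hi : i ∉ σ) :
    branch σ g h G H (.inr (.inr i)) = H i :=
  Set.piecewise_eq_of_notMem _ _ _ hi

lemma rel_branch {r : α → β → Prop} {g₂ : Fin p → β} {h₂ : Fin q → β} {G₂ H₂ : Fin m → β}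
    (hg : ∀ i, r (g i) (g₂ i)) (hh : ∀ j, r (h j) (h₂ j)) (hG : ∀ i, r (G i) (G₂ i))
    (hH : ∀ i, r (H i) (H₂ i)) (i : Fin p ⊕ Fin q ⊕ Fin m) :
    r (branch σ g h G H i) (branch σ g₂ h₂ G₂ H₂ i) := by
  obtain i | j | i := i
  · exact hg i
  · exact hh j
  · by_cases hi : i ∈ σ
    · simpa only [branch_inr_inr_of_mem hi] using hG i
    · simpa only [branch_inr_inr_of_notMem hi] using hH i

lemma forall_branch_inr {r : α → Prop} :
    (∀ i, r (branch σ g h G H (.inr i))) ↔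
      (∀ j, r (h j)) ∧ (∀ i ∈ σ, r (G i)) ∧ ∀ i ∉ σ, r (H i) := by
  refine ⟨fun hr => ⟨fun j => hr (.inl j), fun i hi => ?_, fun i hi => ?_⟩, ?_⟩
  · simpa only [branch_inr_inr_of_mem hi] using hr (.inr i)
  · simpa only [branch_inr_inr_of_notMem hi] using hr (.inr i)
  · rintro ⟨hh, hG, hH⟩ (j | i)
    · exact hh j
    · by_cases hi : i ∈ σ
      · simpa only [branch_inr_inr_of_mem hi] using hG i hi
      · simpa only [branch_inr_inr_of_notMem hi] using hH i hi

lemma sum_smul_branch {M : Type*} [AddCommGroup M] [Module ℝ M] (φ : α → M)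
    (l : Fin p ⊕ Fin q ⊕ Fin m → ℝ) :
    ∑ i, l i • φ (branch σ g h G H i) =
      ∑ i, l (.inl i) • φ (g i) + ∑ j, l (.inr (.inl j)) • φ (h j) +
        ∑ i, (σ.indicator (l ∘ .inr ∘ .inr) i • φ (G i) +
          σᶜ.indicator (l ∘ .inr ∘ .inr) i • φ (H i)) := by
  simp only [Fintype.sum_sum_type, branch_inl, branch_inr_inl, add_assoc]
  congr! 3 with i
  by_cases hi : i ∈ σ <;> simp [hi]

end Branch

section BranchSystem

variable (P : MPSC n p q m)

/-- The gradients of the constraints of the branch `σ`. -/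
def branchGrad (σ : Set (Fin m)) : Fin p ⊕ Fin q ⊕ Fin m → Euc n → Euc n :=
  branch σ P.g' P.h' P.G' P.H'

variable {P} in
lemma hasGradientAt_branch_and_continuous {σ : Set (Fin m)} (i : Fin p ⊕ Fin q ⊕ Fin m) :
    (∀ z, HasGradientAt (branch σ P.g P.h P.G P.H i) (P.branchGrad σ i z) z) ∧
      Continuous (P.branchGrad σ i) :=
  rel_branch (r := fun φ (φ' : Euc n → Euc n) => (∀ z, HasGradientAt φ (φ' z) z) ∧ Continuous φ')
    (fun i => ⟨P.grad_g i, P.cont_g' i⟩) (fun j => ⟨P.grad_h j, P.cont_h' j⟩)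
    (fun i => ⟨P.grad_G i, P.cont_G' i⟩) (fun i => ⟨P.grad_H i, P.cont_H' i⟩) i

/-- The branch `σ` of the MPSC as a system of inequalities and equations. -/
def branchSystem (σ : Set (Fin m)) : ConstraintSystem (Fin p ⊕ Fin q ⊕ Fin m) (Euc n) where
  ineq := Set.range Sum.inl
  c := branch σ P.g P.h P.G P.H
  c' i z := toDual ℝ (Euc n) (P.branchGrad σ i z)
  hasFDerivAt_c i := (hasGradientAt_branch_and_continuous i).1
  continuous_c' i :=
    (toDual ℝ (Euc n)).continuous.comp (hasGradientAt_branch_and_continuous i).2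

variable {P} {σ : Set (Fin m)} {z d : Euc n} {l : EuclideanSpace ℝ (Fin p ⊕ Fin q ⊕ Fin m)}

lemma mem_feasible_branchSystem :
    z ∈ (P.branchSystem σ).feasible ↔ (∀ i, P.g i z ≤ 0) ∧ (∀ j, P.h j z = 0) ∧
      (∀ i ∈ σ, P.G i z = 0) ∧ ∀ i ∉ σ, P.H i z = 0 := by
  rw [← forall_branch_inr (r := fun φ => φ z = 0) (g := P.g)]
  refine Sum.forall.trans (and_congr (forall_congr' fun i => ?_) (forall_congr' fun i => ?_))
  · exact ConstraintSystem.excess_eq_zero (Set.mem_range_self i)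
  · rw [ConstraintSystem.excess_of_notMem (by simp [branchSystem])]
    rfl

lemma mem_linCone_branchSystem :
    d ∈ (P.branchSystem σ).linCone z ↔ (∀ i ∈ P.Ig z, ⟪P.g' i z, d⟫_ℝ ≤ 0) ∧
      (∀ j, ⟪P.h' j z, d⟫_ℝ = 0) ∧ (∀ i ∈ σ, ⟪P.G' i z, d⟫_ℝ = 0) ∧
      ∀ i ∉ σ, ⟪P.H' i z, d⟫_ℝ = 0 := by
  rw [← forall_branch_inr (r := fun φ' => ⟪φ' z, d⟫_ℝ = 0) (g := P.g')]
  simp [ConstraintSystem.linCone, branchSystem, branchGrad, Ig]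

lemma feasible_branchSystem_subset : (P.branchSystem σ).feasible ⊆ P.Feas := fun z hz => by
  obtain ⟨hg, hh, hG, hH⟩ := mem_feasible_branchSystem.1 hz
  refine ⟨hg, hh, fun i => ?_⟩
  by_cases hi : i ∈ σ
  · exact mul_eq_zero_of_left (hG i hi) _
  · exact mul_eq_zero_of_right _ (hH i hi)

lemma adjointDeriv_branchSystem :
    (P.branchSystem σ).adjointDeriv z l = toDual ℝ (Euc n)
      (∑ i, l (.inl i) • P.g' i z + ∑ j, l (.inr (.inl j)) • P.h' j z +
        ∑ i, (σ.indicator (l ∘ .inr ∘ .inr) i • P.G' i z +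
          σᶜ.indicator (l ∘ .inr ∘ .inr) i • P.H' i z)) := by
  have hsum := sum_smul_branch (σ := σ) (g := P.g') (h := P.h') (G := P.G') (H := P.H')
    (fun φ' => φ' z) l
  rw [← hsum, ConstraintSystem.adjointDeriv_apply, map_sum]
  simp [branchSystem, branchGrad]

end BranchSystem

section DirectionalBranch

variable (P : MPSC n p q m) (z d : Euc n)

/-- The switching constraints whose first factor is kept in the branch adapted to the direction
`d`: those on which `G` has to vanish along `d`, together with the undecided ones. -/
def dirBranch : Set (Fin m) := P.IGs z ∪ P.IGd z d ∪ P.IGHd z d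

variable {P z d} {l : EuclideanSpace ℝ (Fin p ⊕ Fin q ⊕ Fin m)}

lemma eq_zero_of_mem_dirBranch (hd : d ∈ P.LinCone z) {i : Fin m} (hi : i ∈ P.dirBranch z d) :
    P.G i z = 0 ∧ ⟪P.G' i z, d⟫_ℝ = 0 := by
  obtain ⟨-, -, hG, -⟩ := hd
  obtain (hi | hi) | hi := hi
  · exact ⟨hi.1, hG i hi⟩
  · exact ⟨hi.1.1, hi.2.1⟩
  · exact ⟨hi.1.1, hi.2.1⟩

lemma eq_zero_of_notMem_dirBranch (hz : z ∈ P.Feas) (hd : d ∈ P.LinCone z) {i : Fin m}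
    (hi : i ∉ P.dirBranch z d) : P.H i z = 0 ∧ ⟪P.H' i z, d⟫_ℝ = 0 := by
  obtain ⟨-, -, -, hLH, hLGH⟩ := hd
  simp only [dirBranch, Set.mem_union, not_or] at hi
  obtain ⟨⟨hGs, hGd⟩, -⟩ := hi
  have hH : P.H i z = 0 := by
    by_contra hH
    exact hGs ⟨(mul_eq_zero.1 (hz.2.2 i)).resolve_right hH, hH⟩
  refine ⟨hH, ?_⟩
  by_cases hG : P.G i z = 0
  · by_contra hHd
    exact hGd ⟨⟨hG, hH⟩, (mul_eq_zero.1 (hLGH i ⟨hG, hH⟩)).resolve_right hHd, hHd⟩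
  · exact hLH i ⟨hG, hH⟩

lemma mem_feasible_dirBranch (hz : z ∈ P.Feas) (hd : d ∈ P.LinCone z) :
    z ∈ (P.branchSystem (P.dirBranch z d)).feasible :=
  mem_feasible_branchSystem.2 ⟨hz.1, hz.2.1, fun _ hi => (eq_zero_of_mem_dirBranch hd hi).1,
    fun _ hi => (eq_zero_of_notMem_dirBranch hz hd hi).1⟩

lemma mem_linCone_dirBranch (hz : z ∈ P.Feas) (hd : d ∈ P.LinCone z) :
    d ∈ (P.branchSystem (P.dirBranch z d)).linCone z :=
  mem_linCone_branchSystem.2 ⟨hd.1, hd.2.1, fun _ hi => (eq_zero_of_mem_dirBranch hd hi).2,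
    fun _ hi => (eq_zero_of_notMem_dirBranch hz hd hi).2⟩

lemma admissible_of_mem_multiplierCone (hd : d ∈ P.LinCone z)
    (hl : l ∈ (P.branchSystem (P.dirBranch z d)).multiplierCone z d) :
    (∀ i ∈ P.Igd z d, 0 ≤ l (.inl i)) ∧ (∀ i ∉ P.Igd z d, l (.inl i) = 0) ∧
      (∀ i, i ∈ P.IGs z ∪ P.IGd z d → (P.dirBranch z d)ᶜ.indicator (l ∘ .inr ∘ .inr) i = 0) ∧
      (∀ i, i ∈ P.IHs z ∪ P.IHd z d → (P.dirBranch z d).indicator (l ∘ .inr ∘ .inr) i = 0) ∧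
      ∀ i ∈ P.IGHd z d, (P.dirBranch z d).indicator (l ∘ .inr ∘ .inr) i *
        (P.dirBranch z d)ᶜ.indicator (l ∘ .inr ∘ .inr) i = 0 := by
  refine ⟨fun i _ => hl.1 _ (Set.mem_range_self i), fun i hi => hl.2 _ ?_, fun i hi => ?_,
    fun i hi => ?_, fun i hi => ?_⟩
  · simpa [ConstraintSystem.activeDir, branchSystem, branchGrad, Igd] using hi
  · exact Set.indicator_of_notMem (not_not_intro (.inl hi)) _
  · refine Set.indicator_of_notMem (fun hσ => ?_) _
    obtain ⟨hG, hGd⟩ := eq_zero_of_mem_dirBranch hd hσ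
    exact hi.elim (fun hs => hs.1 hG) fun hs => hs.2.1 hGd
  · exact mul_eq_zero_of_right _ (Set.indicator_of_notMem (not_not_intro (.inr hi)) _)

lemma isMMultDir_of_mem_multiplierCone (hd : d ∈ P.LinCone z)
    (hl : l ∈ (P.branchSystem (P.dirBranch z d)).multiplierCone z d)
    (hstat : toDual ℝ (Euc n) (P.f' z) +
      (P.branchSystem (P.dirBranch z d)).adjointDeriv z l = 0) :
    P.IsMMultDir z d (fun i => l (.inl i)) (fun j => l (.inr (.inl j)))
      ((P.dirBranch z d).indicator (l ∘ .inr ∘ .inr))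
      ((P.dirBranch z d)ᶜ.indicator (l ∘ .inr ∘ .inr)) := by
  obtain ⟨hnonneg, hinactive, hH, hG, hGH⟩ := admissible_of_mem_multiplierCone hd hl
  refine ⟨?_, hnonneg, hinactive, hG, hH, hGH⟩
  rw [adjointDeriv_branchSystem, ← map_add, LinearIsometryEquiv.map_eq_zero_iff] at hstat
  rw [Finset.sum_filter_of_ne fun i _ => Not.imp_symm fun hi =>
      smul_eq_zero_of_left (hinactive i hi) _,
    ← hstat]
  simp only [add_assoc]

lemma QuasiNormalDir.branchSystem (hd : d ∈ P.LinCone z) (h : P.QuasiNormalDir z d) :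
    (P.branchSystem (P.dirBranch z d)).QuasiNormalDir z d := by
  intro l hl hl0 hfreq
  obtain ⟨dk, t, hdk, ht, ht0, hk⟩ := exists_seq_of_frequently_dirNhds hfreq
  have hsignG : ∀ k i, (P.dirBranch z d).indicator (l ∘ .inr ∘ .inr) i ≠ 0 →
      0 < (P.dirBranch z d).indicator (l ∘ .inr ∘ .inr) i * P.G i (z + t k • dk k) := by
    intro k i hi
    have hσ := Set.mem_of_indicator_ne_zero hi
    rw [Set.indicator_of_mem hσ] at hi ⊢
    simpa [MPSC.branchSystem, branch_inr_inr_of_mem hσ] using hk k (.inr (.inr i)) hi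
  have hsignH : ∀ k i, (P.dirBranch z d)ᶜ.indicator (l ∘ .inr ∘ .inr) i ≠ 0 →
      0 < (P.dirBranch z d)ᶜ.indicator (l ∘ .inr ∘ .inr) i * P.H i (z + t k • dk k) := by
    intro k i hi
    have hσ := Set.mem_of_indicator_ne_zero hi
    rw [Set.indicator_of_mem hσ] at hi ⊢
    simpa [MPSC.branchSystem, branch_inr_inr_of_notMem hσ] using hk k (.inr (.inr i)) hi
  rw [adjointDeriv_branchSystem, LinearIsometryEquiv.map_eq_zero_iff] at hl0
  obtain ⟨hlg, hlh, hlG, hlH⟩ := h _ _ _ _ hl0.symm (admissible_of_mem_multiplierCone hd hl)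
    ⟨dk, t, hdk, ht, ht0, fun k =>
      ⟨fun i => hk k (.inl i), fun j => hk k (.inr (.inl j)), hsignG k, hsignH k⟩⟩
  ext (i | j | i)
  · exact congrFun hlg i
  · exact congrFun hlh j
  · have hi := Set.indicator_self_add_compl_apply (P.dirBranch z d) (l ∘ .inr ∘ .inr) i
    rw [hlG, hlH] at hi
    exact hi.symm.trans (add_zero _)

end DirectionalBranch

end MPSC

/-- under quasi-normality in a critical direction `d` and twice
differentiability at `z*`, there is an M-multiplier in direction `d` satisfying the
second-order condition `dᵀ ∇²L(z*,λ) d ≥ 0`. -/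
theorem mpsc_quasiNormal_second_order_dir {n p q m : ℕ} (P : MPSC n p q m) (zs : Euc n)
    (hfeas : zs ∈ P.Feas) (hmin : IsLocalMinOn P.f P.Feas zs)
    (d : Euc n) (hd : d ∈ P.Crit zs) (hqn : P.QuasiNormalDir zs d)
    (f'' : Euc n →L[ℝ] Euc n) (g'' : Fin p → Euc n →L[ℝ] Euc n)
    (h'' : Fin q → Euc n →L[ℝ] Euc n) (G'' H'' : Fin m → Euc n →L[ℝ] Euc n)
    (hf'' : HasFDerivAt P.f' f'' zs) (hg'' : ∀ i, HasFDerivAt (P.g' i) (g'' i) zs)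
    (hh'' : ∀ j, HasFDerivAt (P.h' j) (h'' j) zs)
    (hG'' : ∀ i, HasFDerivAt (P.G' i) (G'' i) zs)
    (hH'' : ∀ i, HasFDerivAt (P.H' i) (H'' i) zs) :
    ∃ (lg : Fin p → ℝ) (lh : Fin q → ℝ) (lG lH : Fin m → ℝ),
      P.IsMMultDir zs d lg lh lG lH ∧
      0 ≤ ⟪f'' d, d⟫_ℝ + (∑ i, lg i * ⟪g'' i d, d⟫_ℝ) + (∑ j, lh j * ⟪h'' j d, d⟫_ℝ)
          + (∑ i, (lG i * ⟪G'' i d, d⟫_ℝ + lH i * ⟪H'' i d, d⟫_ℝ)) := by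
  have hL := hd.1
  let σ := P.dirBranch zs d
  let J : Euc n →L[ℝ] StrongDual ℝ (Euc n) := innerSL ℝ
  have hbranch'' : ∀ i, HasFDerivAt (P.branchGrad σ i) (MPSC.branch σ g'' h'' G'' H'' i) zs :=
    MPSC.rel_branch (r := fun φ φ'' => HasFDerivAt φ φ'' zs) hg'' hh'' hG'' hH''
  obtain ⟨l, hl, hstat, hsecond⟩ :=
    (hqn.branchSystem hL).exists_second_order_multiplier (f := P.f)
      (f' := fun z => InnerProductSpace.toDual ℝ (Euc n) (P.f' z))
      (MPSC.mem_feasible_dirBranch hfeas hL) (MPSC.mem_linCone_dirBranch hfeas hL) hd.2 P.grad_f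
      (J.hasFDerivAt.comp zs hf'') (fun i => J.hasFDerivAt.comp zs (hbranch'' i))
      (hmin.on_subset MPSC.feasible_branchSystem_subset)
  refine ⟨_, _, _, _, MPSC.isMMultDir_of_mem_multiplierCone hL hl hstat, hsecond.trans_eq ?_⟩
  have hsum := MPSC.sum_smul_branch (σ := σ) (g := g'') (h := h'') (G := G'') (H := H'')
    (fun A => ⟪A d, d⟫_ℝ) l
  simp only [smul_eq_mul] at hsum
  rw [add_assoc, add_assoc, ← add_assoc (∑ i, _), ← hsum]
  rfl
end
end

section
/- Let z* be a feasible point of the MPSC and suppose f, g, h, G, H are twice differentiable at z*. Suppose that for every nonzero critical direction d ∈ C(z*) there exists an S-multiplier (λ^g, λ^h, λ^G, λ^H) — i.e. multipliers satisfying 0 = ∇f(z*) + Σ_{i∈I_g*} λ_i^g ∇g_i(z*) + Σ_{j=1}^q λ_j^h ∇h_j(z*) + Σ_{i=1}^m (λ_i^G ∇G_i(z*) + λ_i^H ∇H_i(z*)), λ_i^g ≥ 0 for i ∈ I_g* and λ_i^g = 0 for i ∉ I_g*, λ_i^G = 0 for i ∈ I_H*, λ_i^H = 0 for i ∈ I_G*,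 and λ_i^G = λ_i^H = 0 for all i ∈ I_GH* — such that the second-order condition dᵀ ∇²_z L(z*, λ^g, λ^h, λ^G, λ^H) d > 0 holds, where L(z, λ) := f(z) + Σ λ_i^g g_i(z) + Σ λ_j^h h_j(z) + Σ (λ_i^G G_i(z) + λ_i^H H_i(z)). Then z* is a strict local minimizer of the MPSC. -/
open scoped Classical InnerProductSpace
open Filter Topology

noncomputable section

/-!
If `z*` is not a strict local minimizer, it is an accumulation point of the feasible points `z` with
`f z ≤ f z*`, so this set has a nonzero tangent direction `d` at `z*`. Such a `d` is critical: to
first order, tangent directions of the feasible region lie in the linearization cone, and `f` does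
not increase along `d`. Take the S-multiplier attached to `d`. Near `z*`, feasibility forces
`Gᵢ = 0` or `Hᵢ = 0` exactly where the corresponding multiplier may be nonzero, so the switching
terms of the Lagrangian vanish there and `L ≤ f` on the feasible region, with equality at `z*`.
Hence `z*` maximizes `L` locally over the set; as it is a critical point of `L`, a second-order
Taylor expansion along `d` gives `⟪∇²L d, d⟫ ≤ 0`, a contradiction.
-/

section SecondOrder

variable {E F : Type*} [NormedAddCommGroup E] [NormedSpace ℝ E]
  [NormedAddCommGroup F] [NormedSpace ℝ F]

theorem isLittleO_taylor_two_of_hasFDerivAt {φ : E → F} {φ' : E → E →L[ℝ] F}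
    {φ'' : E →L[ℝ] E →L[ℝ] F} {x : E} (hφ : ∀ᶠ z in 𝓝 x, HasFDerivAt φ (φ' z) z)
    (hφ' : HasFDerivAt φ' φ'' x) :
    (fun z ↦ φ z - φ x - φ' x (z - x) - (1 / 2 : ℝ) • φ'' (z - x) (z - x))
      =o[𝓝 x] fun z ↦ ‖z - x‖ ^ 2 := by
  obtain ⟨r, hr, hball⟩ := Metric.eventually_nhds_iff_ball.1 hφ
  let R : E → F := fun z ↦ φ z - φ' x (z - x) - (1 / 2 : ℝ) • φ'' (z - x) (z - x)
  have hsub (z : E) : HasFDerivAt (fun w ↦ w - x) (.id ℝ E) z := (hasFDerivAt_id z).sub_const x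
  have hR (z) (hz : z ∈ Metric.ball x r) : HasFDerivAt R (φ' z - φ' x - φ'' (z - x)) z := by
    have hquad := ((φ''.hasFDerivAt.comp z (hsub z)).clm_apply (hsub z)).const_smul (1 / 2 : ℝ)
    refine (((hball z hz).sub ((φ' x).hasFDerivAt.comp z (hsub z))).sub hquad).congr_fderiv ?_
    ext v
    have hsymm : φ'' v (z - x) = φ'' (z - x) v :=
      second_derivative_symmetric_of_eventually hφ hφ' v (z - x)
    simp only [sub_apply, add_apply, smul_apply, ContinuousLinearMap.comp_apply,
      ContinuousLinearMap.flip_apply, ContinuousLinearMap.id_apply, Function.comp_apply, hsymm]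
    module
  have hR' : (fun z ↦ φ' z - φ' x - φ'' (z - x)) =o[𝓝[Metric.ball x r] x]
      fun z ↦ ‖z - x‖ ^ 1 := by
    simpa only [pow_one] using (hφ'.isLittleO.norm_right).mono nhdsWithin_le_nhds
  have hmean := (convex_ball x r).isLittleO_pow_succ (Metric.mem_ball_self hr)
    (fun z hz ↦ (hR z hz).hasFDerivWithinAt) hR'
  rw [nhdsWithin_eq_nhds.2 (Metric.ball_mem_nhds x hr)] at hmean
  refine hmean.congr_left fun z ↦ ?_
  simp only [R, sub_self, map_zero, smul_zero, sub_zero]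
  abel

theorem tendsto_sq_smul_taylor_one_of_hasFDerivAt {φ : E → F} {φ' : E → E →L[ℝ] F}
    {φ'' : E →L[ℝ] E →L[ℝ] F} {x y : E} (hφ : ∀ᶠ z in 𝓝 x, HasFDerivAt φ (φ' z) z)
    (hφ' : HasFDerivAt φ' φ'' x) {α : Type*} {l : Filter α} {c : α → ℝ} {d : α → E}
    (hd : Tendsto d l (𝓝 0)) (hcd : Tendsto (fun a ↦ c a • d a) l (𝓝 y)) :
    Tendsto (fun a ↦ c a ^ 2 • (φ (x + d a) - φ x - φ' x (d a))) l
      (𝓝 ((1 / 2 : ℝ) • φ'' y y)) := by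
  let R : E → F := fun v ↦ φ (x + v) - φ x - φ' x v - (1 / 2 : ℝ) • φ'' v v
  have hxd : Tendsto (fun a ↦ x + d a) l (𝓝 x) := by simpa using hd.const_add x
  have hR : (fun a ↦ R (d a)) =o[l] fun a ↦ ‖d a‖ ^ 2 := by
    simpa only [Function.comp_def, add_sub_cancel_left] using
      (isLittleO_taylor_two_of_hasFDerivAt hφ hφ').comp_tendsto hxd
  have hrem : Tendsto (fun a ↦ c a ^ 2 • R (d a)) l (𝓝 0) := by
    have hbdd : (fun a ↦ c a ^ 2 • ‖d a‖ ^ 2) =O[l] fun _ ↦ (1 : ℝ) := by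
      refine ((hcd.norm.pow 2).isBigO_one ℝ).congr_left fun a ↦ ?_
      rw [norm_smul, mul_pow, Real.norm_eq_abs, sq_abs, smul_eq_mul]
    exact (Asymptotics.isLittleO_one_iff ℝ).1
      (((Asymptotics.isBigO_refl (fun a ↦ c a ^ 2) l).smul_isLittleO hR).trans_isBigO hbdd)
  have hquad : Tendsto (fun a ↦ (1 / 2 : ℝ) • φ'' (c a • d a) (c a • d a)) l
      (𝓝 ((1 / 2 : ℝ) • φ'' y y)) :=
    ((φ''.isBoundedBilinearMap.continuous.tendsto (y, y)).comp
      (hcd.prodMk_nhds hcd)).const_smul _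
  rw [← zero_add ((1 / 2 : ℝ) • φ'' y y)]
  refine (hrem.add hquad).congr fun a ↦ ?_
  simp only [R, map_smul, smul_apply]
  module

theorem second_derivative_nonpos_of_mem_tangentConeAt {φ : E → ℝ} {φ' : E → E →L[ℝ] ℝ}
    {φ'' : E →L[ℝ] E →L[ℝ] ℝ} {s : Set E} {x y : E} (hmax : IsLocalMaxOn φ s x)
    (hφ : ∀ᶠ z in 𝓝 x, HasFDerivAt φ (φ' z) z) (hφ' : HasFDerivAt φ' φ'' x)
    (hcrit : φ' x = 0) (hy : y ∈ tangentConeAt ℝ s x) : φ'' y y ≤ 0 := by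
  obtain ⟨α, l, _, c, d, hd, hds, hcd⟩ := exists_fun_of_mem_tangentConeAt hy
  have hxd : Tendsto (fun a ↦ x + d a) l (𝓝[s] x) :=
    tendsto_nhdsWithin_iff.2 ⟨by simpa using hd.const_add x, hds⟩
  have hlim : (1 / 2 : ℝ) • φ'' y y ≤ 0 := by
    refine le_of_tendsto (tendsto_sq_smul_taylor_one_of_hasFDerivAt hφ hφ' hd hcd) ?_
    filter_upwards [hxd.eventually hmax] with a ha
    rw [hcrit, zero_apply, sub_zero]
    exact smul_nonpos_of_nonneg_of_nonpos (sq_nonneg _) (sub_nonpos.2 ha)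
  rw [smul_eq_mul] at hlim
  linarith

theorem inner_second_derivative_nonpos_of_mem_tangentConeAt {V : Type*}
    [NormedAddCommGroup V] [InnerProductSpace ℝ V] [CompleteSpace V] {φ : V → ℝ} {φ' : V → V}
    {φ'' : V →L[ℝ] V} {s : Set V} {x y : V} (hmax : IsLocalMaxOn φ s x)
    (hφ : ∀ᶠ z in 𝓝 x, HasGradientAt φ (φ' z) z) (hφ' : HasFDerivAt φ' φ'' x)
    (hcrit : φ' x = 0) (hy : y ∈ tangentConeAt ℝ s x) : ⟪φ'' y, y⟫_ℝ ≤ 0 := by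
  -- `innerSL ℝ` is conjugate-linear in its first slot; over `ℝ` the conjugation unfolds to `id`.
  let ι : V →L[ℝ] V →L[ℝ] ℝ := innerSL ℝ
  exact second_derivative_nonpos_of_mem_tangentConeAt (φ' := fun z ↦ ι (φ' z))
    (φ'' := ι.comp φ'') hmax (hφ.mono fun z hz ↦ hz.hasFDerivAt)
    (ι.hasFDerivAt.comp x hφ') (by simp [hcrit]) hy

end SecondOrder

section TangentCone

theorem hasFDerivWithinAt_apply_eq_zero_of_eventuallyEq_const {𝕜 E F : Type*}
    [NontriviallyNormedField 𝕜] [NormedAddCommGroup E] [NormedSpace 𝕜 E]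
    [NormedAddCommGroup F] [NormedSpace 𝕜 F] {φ : E → F} {φ' : E →L[𝕜] F} {s : Set E} {x y : E}
    (hφ : HasFDerivWithinAt φ φ' s x) (hconst : φ =ᶠ[𝓝[s] x] fun _ ↦ φ x)
    (hy : y ∈ tangentConeAt 𝕜 s x) : φ' y = 0 :=
  hφ.unique_on ((hasFDerivWithinAt_const (φ x) x s).congr_of_eventuallyEq hconst rfl) hy

theorem hasFDerivWithinAt_apply_mul_apply_eq_zero {𝕜 E : Type*} [NontriviallyNormedField 𝕜]
    [NormedAddCommGroup E] [NormedSpace 𝕜 E] {φ ψ : E → 𝕜} {φ' ψ' : E →L[𝕜] 𝕜} {s : Set E}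
    {x y : E} (hφ : HasFDerivWithinAt φ φ' s x) (hψ : HasFDerivWithinAt ψ ψ' s x)
    (hφx : φ x = 0) (hψx : ψ x = 0) (hmul : ∀ z ∈ s, φ z * ψ z = 0)
    (hy : y ∈ tangentConeAt 𝕜 s x) : φ' y * ψ' y = 0 := by
  obtain ⟨α, l, _, c, d, hd, hds, hcd⟩ := exists_fun_of_mem_tangentConeAt hy
  refine tendsto_nhds_unique ((hφ.lim hd hds hcd).mul (hψ.lim hd hds hcd))
    (tendsto_const_nhds.congr' ?_)
  filter_upwards [hds] with a ha
  rw [hφx, hψx, sub_zero, sub_zero, smul_mul_smul_comm, hmul _ ha, smul_zero]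

variable {E : Type*} [NormedAddCommGroup E] [NormedSpace ℝ E] [ProperSpace E]

theorem exists_ne_zero_mem_posTangentConeAt_of_accPt {s : Set E} {x : E}
    (hx : AccPt x (𝓟 s)) : ∃ d ∈ posTangentConeAt s x, d ≠ 0 := by
  have : NeBot (𝓝[≠] x ⊓ 𝓟 s) := hx
  let u : Ultrafilter E := .of (𝓝[≠] x ⊓ 𝓟 s)
  have hu : ↑u ≤ 𝓝[≠] x ⊓ 𝓟 s := Ultrafilter.of_le _
  let dir : E → E := fun z ↦ ‖z - x‖₊⁻¹ • (z - x)
  have hsphere : ∀ᶠ z in u, dir z ∈ Metric.sphere (0 : E) 1 := by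
    filter_upwards [hu (mem_inf_of_left self_mem_nhdsWithin)] with z hz
    have hz' : ‖z - x‖ ≠ 0 := norm_ne_zero_iff.2 (sub_ne_zero.2 hz)
    simp [dir, NNReal.smul_def, norm_smul, hz']
  obtain ⟨d, hd, hdir⟩ := (isCompact_sphere (0 : E) 1).ultrafilter_le_nhds (u.map dir)
    (le_principal_iff.2 hsphere)
  refine ⟨d, mem_tangentConeAt_of_seq u (fun z ↦ ‖z - x‖₊⁻¹) (fun z ↦ z - x) ?_ ?_ hdir,
    ne_zero_of_mem_unit_sphere ⟨d, hd⟩⟩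
  · exact (tendsto_sub_nhds_zero_iff.2 tendsto_id).mono_left
      (hu.trans (inf_le_left.trans nhdsWithin_le_nhds))
  · simpa using hu (mem_inf_of_right (mem_principal_self s))

theorem eventually_lt_of_posTangentConeAt_subset_zero {β : Type*} [LinearOrder β] {f : E → β}
    {s : Set E} {x : E} (h : posTangentConeAt (s ∩ {z | f z ≤ f x}) x ⊆ {0}) :
    ∀ᶠ z in 𝓝 x, z ∈ s → z ≠ x → f x < f z := by
  by_contra hcon
  obtain ⟨d, hd, hd0⟩ := exists_ne_zero_mem_posTangentConeAt_of_accPt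
    (s := s ∩ {z | f z ≤ f x}) (x := x) (accPt_iff_frequently.2 <|
      (not_eventually.1 hcon).mono fun z hz ↦ by
        push Not at hz
        exact ⟨hz.2.1, hz.1, hz.2.2⟩)
  exact hd0 (h hd)

end TangentCone

namespace MPSC

variable {n p q m : ℕ} {P : MPSC n p q m} {zs : Euc n}

section FirstOrder

theorem eventually_G_eq_zero {i : Fin m} (hi : P.H i zs ≠ 0) :
    ∀ᶠ z in 𝓝[P.Feas] zs, P.G i z = 0 := by
  filter_upwards [self_mem_nhdsWithin,
    nhdsWithin_le_nhds ((P.grad_H i zs).continuousAt.eventually_ne hi)] with z hz hHz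
  exact (mul_eq_zero.1 (hz.2.2 i)).resolve_right hHz

theorem eventually_H_eq_zero {i : Fin m} (hi : P.G i zs ≠ 0) :
    ∀ᶠ z in 𝓝[P.Feas] zs, P.H i z = 0 := by
  filter_upwards [self_mem_nhdsWithin,
    nhdsWithin_le_nhds ((P.grad_G i zs).continuousAt.eventually_ne hi)] with z hz hGz
  exact (mul_eq_zero.1 (hz.2.2 i)).resolve_left hGz

theorem posTangentConeAt_feas_subset_linCone (hfeas : zs ∈ P.Feas) :
    posTangentConeAt P.Feas zs ⊆ P.LinCone zs := by
  intro d hd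
  have hd' : d ∈ tangentConeAt ℝ P.Feas zs := tangentConeAt_mono_field hd
  have inner_eq_zero {φ : Euc n → ℝ} {v : Euc n} (hφ : HasGradientAt φ v zs) (h0 : φ zs = 0)
      (hev : ∀ᶠ z in 𝓝[P.Feas] zs, φ z = 0) : ⟪v, d⟫_ℝ = 0 :=
    hasFDerivWithinAt_apply_eq_zero_of_eventuallyEq_const hφ.hasFDerivAt.hasFDerivWithinAt
      (hev.mono fun z hz ↦ hz.trans h0.symm) hd'
  refine ⟨fun i hi ↦ ?_, fun j ↦ ?_, fun i hi ↦ ?_, fun i hi ↦ ?_, fun i hi ↦ ?_⟩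
  · have hmax : IsLocalMaxOn (P.g i) P.Feas zs :=
      eventually_mem_nhdsWithin.mono fun z hz ↦ (hz.1 i).trans_eq (Eq.symm hi)
    exact hmax.hasFDerivWithinAt_nonpos (P.grad_g i zs).hasFDerivAt.hasFDerivWithinAt hd
  · exact inner_eq_zero (P.grad_h j zs) (hfeas.2.1 j)
      (eventually_mem_nhdsWithin.mono fun z hz ↦ hz.2.1 j)
  · exact inner_eq_zero (P.grad_G i zs) hi.1 (eventually_G_eq_zero hi.2)
  · exact inner_eq_zero (P.grad_H i zs) hi.2 (eventually_H_eq_zero hi.1)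
  · exact hasFDerivWithinAt_apply_mul_apply_eq_zero
      (P.grad_G i zs).hasFDerivAt.hasFDerivWithinAt (P.grad_H i zs).hasFDerivAt.hasFDerivWithinAt
      hi.1 hi.2 (fun z hz ↦ hz.2.2 i) hd'

theorem posTangentConeAt_feas_inter_subset_crit (hfeas : zs ∈ P.Feas) :
    posTangentConeAt (P.Feas ∩ {z | P.f z ≤ P.f zs}) zs ⊆ P.Crit zs := by
  intro d hd
  refine ⟨posTangentConeAt_feas_subset_linCone hfeas
    (posTangentConeAt_mono Set.inter_subset_left hd), ?_⟩
  have hmax : IsLocalMaxOn P.f (P.Feas ∩ {z | P.f z ≤ P.f zs}) zs :=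
    eventually_mem_nhdsWithin.mono fun z hz ↦ hz.2
  exact hmax.hasFDerivWithinAt_nonpos (P.grad_f zs).hasFDerivAt.hasFDerivWithinAt hd

end FirstOrder

section Lagrangian

variable (P) (lg : Fin p → ℝ) (lh : Fin q → ℝ) (lG lH : Fin m → ℝ)

/-- The Lagrangian `L(z, λ)` of the MPSC. -/
def lagrangian (z : Euc n) : ℝ :=
  P.f z + (∑ i, lg i * P.g i z) + (∑ j, lh j * P.h j z)
    + ∑ i, (lG i * P.G i z + lH i * P.H i z)

/-- The gradient `∇_z L(z, λ)` of the Lagrangian, built from the gradient maps of `P`. -/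
def lagrangianGrad (z : Euc n) : Euc n :=
  P.f' z + (∑ i, lg i • P.g' i z) + (∑ j, lh j • P.h' j z)
    + ∑ i, (lG i • P.G' i z + lH i • P.H' i z)

theorem hasGradientAt_lagrangian (z : Euc n) :
    HasGradientAt (P.lagrangian lg lh lG lH) (P.lagrangianGrad lg lh lG lH z) z := by
  have hderiv := (((P.grad_f z).hasFDerivAt.fun_add
    (.fun_sum fun i (_ : i ∈ Finset.univ) ↦ (P.grad_g i z).hasFDerivAt.const_mul (lg i))).fun_add
    (.fun_sum fun j (_ : j ∈ Finset.univ) ↦ (P.grad_h j z).hasFDerivAt.const_mul (lh j))).fun_add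
    (.fun_sum fun i (_ : i ∈ Finset.univ) ↦
      ((P.grad_G i z).hasFDerivAt.const_mul (lG i)).fun_add
        ((P.grad_H i z).hasFDerivAt.const_mul (lH i)))
  rw [hasGradientAt_iff_hasFDerivAt]
  refine hderiv.congr_fderiv ?_
  simp [lagrangianGrad]

variable {P lg lh lG lH}

theorem hasFDerivAt_lagrangianGrad {f'' : Euc n →L[ℝ] Euc n} {g'' : Fin p → Euc n →L[ℝ] Euc n}
    {h'' : Fin q → Euc n →L[ℝ] Euc n} {G'' H'' : Fin m → Euc n →L[ℝ] Euc n}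
    (hf'' : HasFDerivAt P.f' f'' zs) (hg'' : ∀ i, HasFDerivAt (P.g' i) (g'' i) zs)
    (hh'' : ∀ j, HasFDerivAt (P.h' j) (h'' j) zs)
    (hG'' : ∀ i, HasFDerivAt (P.G' i) (G'' i) zs)
    (hH'' : ∀ i, HasFDerivAt (P.H' i) (H'' i) zs) :
    HasFDerivAt (P.lagrangianGrad lg lh lG lH)
      (f'' + (∑ i, lg i • g'' i) + (∑ j, lh j • h'' j)
        + ∑ i, (lG i • G'' i + lH i • H'' i)) zs :=
  ((hf''.fun_add (.fun_sum fun i _ ↦ (hg'' i).const_smul (lg i))).fun_add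
    (.fun_sum fun j _ ↦ (hh'' j).const_smul (lh j))).fun_add
    (.fun_sum fun i _ ↦ ((hG'' i).const_smul (lG i)).fun_add ((hH'' i).const_smul (lH i)))

theorem IsSMult.lagrangianGrad_eq_zero (hmult : P.IsSMult zs lg lh lG lH)
    (hinactive : ∀ i, i ∉ P.Ig zs → lg i = 0) : P.lagrangianGrad lg lh lG lH zs = 0 := by
  have hsum : ∑ i ∈ Finset.univ.filter (· ∈ P.Ig zs), lg i • P.g' i zs
      = ∑ i, lg i • P.g' i zs :=
    Finset.sum_filter_of_ne fun i _ hi ↦ by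
      contrapose! hi
      rw [hinactive i hi, zero_smul]
  rw [lagrangianGrad, ← hsum]
  exact hmult.1.symm

theorem IsSMult.eventually_switching_eq_zero (hmult : P.IsSMult zs lg lh lG lH)
    (hfeas : zs ∈ P.Feas) :
    ∀ᶠ z in 𝓝[P.Feas] zs, ∀ i, lG i * P.G i z + lH i * P.H i z = 0 := by
  obtain ⟨-, -, hlG, hlH, hlGH⟩ := hmult
  refine eventually_all.2 fun i ↦ ?_
  rcases eq_or_ne (P.G i zs) 0 with hG | hG <;> rcases eq_or_ne (P.H i zs) 0 with hH | hH
  · simp [hlGH i ⟨hG, hH⟩]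
  · filter_upwards [eventually_G_eq_zero hH] with z hz
    simp [hz, hlH i ⟨hG, hH⟩]
  · filter_upwards [eventually_H_eq_zero hG] with z hz
    simp [hz, hlG i ⟨hG, hH⟩]
  · exact absurd (hfeas.2.2 i) (mul_ne_zero hG hH)

theorem lagrangian_eq_of_mem_feas {z : Euc n} (hz : z ∈ P.Feas)
    (hswitch : ∀ i, lG i * P.G i z + lH i * P.H i z = 0) :
    P.lagrangian lg lh lG lH z = P.f z + ∑ i, lg i * P.g i z := by
  simp [lagrangian, hz.2.1, hswitch]

theorem IsSMult.isLocalMaxOn_lagrangian (hmult : P.IsSMult zs lg lh lG lH)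
    (hinactive : ∀ i, i ∉ P.Ig zs → lg i = 0) (hfeas : zs ∈ P.Feas) :
    IsLocalMaxOn (P.lagrangian lg lh lG lH) (P.Feas ∩ {z | P.f z ≤ P.f zs}) zs := by
  have hlg (i : Fin p) : 0 ≤ lg i := by
    by_cases hi : i ∈ P.Ig zs
    exacts [hmult.2.1 i hi, (hinactive i hi).ge]
  have hcompl (i : Fin p) : lg i * P.g i zs = 0 := by
    by_cases hi : i ∈ P.Ig zs
    exacts [mul_eq_zero_of_right _ hi, mul_eq_zero_of_left (hinactive i hi) _]
  have hswitch := hmult.eventually_switching_eq_zero hfeas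
  filter_upwards [eventually_mem_nhdsWithin,
    nhdsWithin_mono zs Set.inter_subset_left hswitch] with z ⟨hz, hfz⟩ hswitchz
  calc P.lagrangian lg lh lG lH z
      = P.f z + ∑ i, lg i * P.g i z := lagrangian_eq_of_mem_feas hz hswitchz
    _ ≤ P.f zs + 0 := add_le_add hfz
        (Finset.sum_nonpos fun i _ ↦ mul_nonpos_of_nonneg_of_nonpos (hlg i) (hz.1 i))
    _ = P.f zs + ∑ i, lg i * P.g i zs := by simp only [hcompl, Finset.sum_const_zero]
    _ = P.lagrangian lg lh lG lH zs :=
        (lagrangian_eq_of_mem_feas hfeas (hswitch.self_of_nhdsWithin hfeas)).symm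

end Lagrangian

end MPSC

/-- if for each nonzero critical direction there is an S-multiplier with
positive second-order curvature, then `z*` is a strict local minimizer of the MPSC. -/
theorem mpsc_second_order_sufficient {n p q m : ℕ} (P : MPSC n p q m) (zs : Euc n)
    (hfeas : zs ∈ P.Feas)
    (f'' : Euc n →L[ℝ] Euc n) (g'' : Fin p → Euc n →L[ℝ] Euc n)
    (h'' : Fin q → Euc n →L[ℝ] Euc n) (G'' H'' : Fin m → Euc n →L[ℝ] Euc n)
    (hf'' : HasFDerivAt P.f' f'' zs) (hg'' : ∀ i, HasFDerivAt (P.g' i) (g'' i) zs)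
    (hh'' : ∀ j, HasFDerivAt (P.h' j) (h'' j) zs)
    (hG'' : ∀ i, HasFDerivAt (P.G' i) (G'' i) zs)
    (hH'' : ∀ i, HasFDerivAt (P.H' i) (H'' i) zs)
    (hyp : ∀ d ∈ P.Crit zs, d ≠ 0 →
      ∃ (lg : Fin p → ℝ) (lh : Fin q → ℝ) (lG lH : Fin m → ℝ),
        P.IsSMult zs lg lh lG lH ∧ (∀ i, i ∉ P.Ig zs → lg i = 0) ∧
        0 < ⟪f'' d, d⟫_ℝ + (∑ i, lg i * ⟪g'' i d, d⟫_ℝ) + (∑ j, lh j * ⟪h'' j d, d⟫_ℝ)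
            + (∑ i, (lG i * ⟪G'' i d, d⟫_ℝ + lH i * ⟪H'' i d, d⟫_ℝ))) :
    ∃ U ∈ 𝓝 zs, ∀ z ∈ U ∩ P.Feas, z ≠ zs → P.f zs < P.f z := by
  refine ⟨_, eventually_lt_of_posTangentConeAt_subset_zero (f := P.f) (s := P.Feas) ?_,
    fun z hz ↦ hz.1 hz.2⟩
  intro d hd
  by_contra hd0
  obtain ⟨lg, lh, lG, lH, hmult, hinactive, hpos⟩ :=
    hyp d (MPSC.posTangentConeAt_feas_inter_subset_crit hfeas hd) hd0
  have hnonpos := inner_second_derivative_nonpos_of_mem_tangentConeAt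
    (hmult.isLocalMaxOn_lagrangian hinactive hfeas)
    (.of_forall (P.hasGradientAt_lagrangian lg lh lG lH))
    (MPSC.hasFDerivAt_lagrangianGrad hf'' hg'' hh'' hG'' hH'')
    (hmult.lagrangianGrad_eq_zero hinactive) (tangentConeAt_mono_field hd)
  refine hpos.not_ge (le_of_eq_of_le ?_ hnonpos)
  simp [inner_add_left, sum_inner, real_inner_smul_left]
end
end

section
/- Let z* be a feasible point of the MPSC, let d ∈ L(z*), and assume that MPSC-LICQ(d) holds at z*. Then z* is strongly M-stationary in direction d if and only if z* is S-stationary in direction d. -/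
open scoped Classical InnerProductSpace
open Filter Topology

noncomputable section

/-!
The gradients entering MPSC-LICQ(d) are exactly those whose rank is `r(z*; d)`, so under
MPSC-LICQ(d) this rank is their number. A working set selects that many of them, hence all of
them, and then `J_G ∩ J_H = I_GH*(d)`: the extra condition in strong M-stationarity becomes the
extra condition in S-stationarity. Conversely, selecting all of them yields a working set as soon
as `J_G ∪ J_H` is everything, and this covering amounts to the conditions on the products
`Gᵢ(z*)Hᵢ(z*)` and `(∇Gᵢ(z*)·d)(∇Hᵢ(z*)·d)` in `z* ∈ F` and `d ∈ L(z*)`.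
-/

namespace MPSC

variable {n p q m : ℕ} {P : MPSC n p q m} {zs d : Euc n}

variable (P zs d) in
/-- `I_G* ∪ I_G*(d) ∪ I_GH*(d)`, the indices `i` for which `∇Gᵢ(z*)` enters MPSC-LICQ(d). -/
def activeG : Set (Fin m) := P.IGs zs ∪ P.IGd zs d ∪ P.IGHd zs d

variable (P zs d) in
/-- `I_H* ∪ I_H*(d) ∪ I_GH*(d)`, the indices `i` for which `∇Hᵢ(z*)` enters MPSC-LICQ(d). -/
def activeH : Set (Fin m) := P.IHs zs ∪ P.IHd zs d ∪ P.IGHd zs d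

variable (P zs) in
/-- The family of all `∇hⱼ(z*)` and of the `∇gᵢ(z*)`, `∇Gᵢ(z*)`, `∇Hᵢ(z*)` with `i` in `Sg`, `SG`,
`SH` respectively. MPSC-LICQ(d) and the independence required of a working set both say that such a
family is linearly independent. The index type is a disjoint sum, so that a gradient
occurring twice makes the family linearly dependent. -/
def gradientFamily (Sg : Set (Fin p)) (SG SH : Set (Fin m)) : Sg ⊕ Fin q ⊕ SG ⊕ SH → Euc n :=
  Sum.elim (fun i => P.g' i zs) (Sum.elim (fun j => P.h' j zs)
    (Sum.elim (fun i => P.G' i zs) (fun i => P.H' i zs)))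

theorem range_gradientFamily (Sg : Set (Fin p)) (SG SH : Set (Fin m)) :
    Set.range (P.gradientFamily zs Sg SG SH) =
      (fun i => P.g' i zs) '' Sg ∪ Set.range (fun j => P.h' j zs) ∪
        (fun i => P.G' i zs) '' SG ∪ (fun i => P.H' i zs) '' SH := by
  simp only [gradientFamily, Set.Sum.elim_range, Set.image_eq_range, Set.union_assoc]

theorem LICQd.rankd_eq (hlicq : P.LICQd zs d) :
    P.rankd zs d =
      (P.Igd zs d).ncard + q + (P.activeG zs d).ncard + (P.activeH zs d).ncard := by
  have hindep :
      LinearIndependent ℝ (P.gradientFamily zs (P.Igd zs d) (P.activeG zs d) (P.activeH zs d)) :=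
    hlicq
  calc P.rankd zs d
      = Set.finrank ℝ (Set.range
          (P.gradientFamily zs (P.Igd zs d) (P.activeG zs d) (P.activeH zs d))) := by
        rw [range_gradientFamily]; rfl
    _ = Fintype.card (P.Igd zs d ⊕ Fin q ⊕ P.activeG zs d ⊕ P.activeH zs d) :=
        finrank_span_eq_card hindep
    _ = _ := by
        simp only [Fintype.card_sum, Fintype.card_fin, Set.ncard_eq_toFinset_card',
          Set.toFinset_card, add_assoc]

theorem IsWorkingSet.coe_eq (hlicq : P.LICQd zs d) {Jg : Finset (Fin p)} {JG JH : Finset (Fin m)}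
    (hJ : P.IsWorkingSet zs d Jg JG JH) :
    (Jg : Set (Fin p)) = P.Igd zs d ∧ (JG : Set (Fin m)) = P.activeG zs d ∧
      (JH : Set (Fin m)) = P.activeH zs d := by
  have hg : (Jg : Set (Fin p)) ⊆ P.Igd zs d := hJ.1
  have hG : (JG : Set (Fin m)) ⊆ P.activeG zs d := hJ.2.1
  have hH : (JH : Set (Fin m)) ⊆ P.activeH zs d := hJ.2.2.1
  have hcard : (Jg : Set (Fin p)).ncard + q + (JG : Set (Fin m)).ncard +
      (JH : Set (Fin m)).ncard =
        (P.Igd zs d).ncard + q + (P.activeG zs d).ncard + (P.activeH zs d).ncard := by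
    simpa only [Set.ncard_coe_finset, hlicq.rankd_eq] using hJ.2.2.2.2.1
  have hg_le := Set.ncard_le_ncard hg
  have hG_le := Set.ncard_le_ncard hG
  have hH_le := Set.ncard_le_ncard hH
  exact ⟨Set.eq_of_subset_of_ncard_le hg (by omega), Set.eq_of_subset_of_ncard_le hG (by omega),
    Set.eq_of_subset_of_ncard_le hH (by omega)⟩

theorem IsWorkingSet.activeG_union_activeH_eq_univ {Jg : Finset (Fin p)} {JG JH : Finset (Fin m)}
    (hJ : P.IsWorkingSet zs d Jg JG JH) : P.activeG zs d ∪ P.activeH zs d = Set.univ := by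
  obtain ⟨-, hG, hH, hunion, -, -⟩ := hJ
  refine Set.eq_univ_of_forall fun i => ?_
  exact (Finset.mem_union.1 (hunion ▸ Finset.mem_univ i)).imp (hG i) (hH i)

theorem LICQd.isWorkingSet_of_coe_eq (hlicq : P.LICQd zs d)
    (hcover : P.activeG zs d ∪ P.activeH zs d = Set.univ) {Jg : Finset (Fin p)}
    {JG JH : Finset (Fin m)} (hg : (Jg : Set (Fin p)) = P.Igd zs d)
    (hG : (JG : Set (Fin m)) = P.activeG zs d) (hH : (JH : Set (Fin m)) = P.activeH zs d) :
    P.IsWorkingSet zs d Jg JG JH := by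
  have hunion : JG ∪ JH = Finset.univ := by
    rw [← Finset.coe_eq_univ, Finset.coe_union, hG, hH, hcover]
  have hcard : Jg.card + q + JG.card + JH.card = P.rankd zs d := by
    simp only [hlicq.rankd_eq, ← hg, ← hG, ← hH, Set.ncard_coe_finset]
  have hindep : LinearIndependent ℝ (P.gradientFamily zs Jg JG JH) := by
    rw [hg, hG, hH]
    exact hlicq
  exact ⟨hg.subset, hG.subset, hH.subset, hunion, hcard, hindep⟩

theorem activeG_union_activeH_eq_univ_iff :
    P.activeG zs d ∪ P.activeH zs d = Set.univ ↔
      (∀ i, P.G i zs * P.H i zs = 0) ∧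
        ∀ i ∈ P.IGH zs, ⟪P.G' i zs, d⟫_ℝ * ⟪P.H' i zs, d⟫_ℝ = 0 := by
  simp only [Set.eq_univ_iff_forall, ← forall_and]
  refine forall_congr' fun i => ?_
  simp only [activeG, activeH, IGs, IHs, IGd, IHd, IGHd, IGH, Set.mem_union, Set.mem_ofPred_eq,
    mul_eq_zero]
  tauto

theorem activeG_inter_activeH : P.activeG zs d ∩ P.activeH zs d = P.IGHd zs d := by
  ext i
  simp only [activeG, activeH, IGs, IHs, IGd, IHd, IGHd, IGH, Set.mem_inter_iff, Set.mem_union,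
    Set.mem_ofPred_eq]
  tauto

theorem IsMMultDir.lG_eq_zero {lg : Fin p → ℝ} {lh : Fin q → ℝ} {lG lH : Fin m → ℝ}
    (hM : P.IsMMultDir zs d lg lh lG lH) {i : Fin m} (hH : i ∈ P.activeH zs d)
    (hG : i ∉ P.activeG zs d) : lG i = 0 :=
  hM.2.2.2.1 i (hH.resolve_right fun hGH => hG (Or.inr hGH))

theorem IsMMultDir.lH_eq_zero {lg : Fin p → ℝ} {lh : Fin q → ℝ} {lG lH : Fin m → ℝ}
    (hM : P.IsMMultDir zs d lg lh lG lH) {i : Fin m} (hG : i ∈ P.activeG zs d)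
    (hH : i ∉ P.activeH zs d) : lH i = 0 :=
  hM.2.2.2.2.1 i (hG.resolve_right fun hGH => hH (Or.inr hGH))

theorem StronglyMStatDir.sStatDir (hlicq : P.LICQd zs d) (hstrong : P.StronglyMStatDir zs d) :
    P.SStatDir zs d := by
  obtain ⟨Jg, JG, JH, lg, lh, lG, lH, hJ, hM, -, -, -, hzero⟩ := hstrong
  obtain ⟨-, hG, hH⟩ := hJ.coe_eq hlicq
  refine ⟨lg, lh, lG, lH, hM, fun i hi => hzero i ?_⟩
  rwa [← Finset.mem_coe, Finset.coe_inter, hG, hH, activeG_inter_activeH]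

theorem SStatDir.stronglyMStatDir (hlicq : P.LICQd zs d)
    (hcover : P.activeG zs d ∪ P.activeH zs d = Set.univ) (hS : P.SStatDir zs d) :
    P.StronglyMStatDir zs d := by
  obtain ⟨lg, lh, lG, lH, hM, hzero⟩ := hS
  have hJ := hlicq.isWorkingSet_of_coe_eq hcover (Set.coe_toFinset (P.Igd zs d))
    (Set.coe_toFinset (P.activeG zs d)) (Set.coe_toFinset (P.activeH zs d))
  have hcover_mem (i : Fin m) : i ∈ P.activeG zs d ∨ i ∈ P.activeH zs d :=
    Set.eq_univ_iff_forall.1 hcover i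
  refine ⟨(P.Igd zs d).toFinset, (P.activeG zs d).toFinset, (P.activeH zs d).toFinset,
    lg, lh, lG, lH, hJ, hM, fun i hi => ?_, fun i hi => ?_, fun i hi => ?_, fun i hi => ?_⟩
  · exact hM.2.2.1 i (by rwa [Set.mem_toFinset] at hi)
  · rw [Set.mem_toFinset] at hi
    exact hM.lG_eq_zero ((hcover_mem i).resolve_left hi) hi
  · rw [Set.mem_toFinset] at hi
    exact hM.lH_eq_zero ((hcover_mem i).resolve_right hi) hi
  · rw [Finset.mem_inter, Set.mem_toFinset, Set.mem_toFinset] at hi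
    exact hzero i (activeG_inter_activeH.subset hi)

theorem StronglyMStatDir.activeG_union_activeH_eq_univ (hstrong : P.StronglyMStatDir zs d) :
    P.activeG zs d ∪ P.activeH zs d = Set.univ := by
  obtain ⟨_, _, _, _, _, _, _, hJ, -⟩ := hstrong
  exact hJ.activeG_union_activeH_eq_univ

end MPSC

theorem mpsc_strongM_iff_S_under_LICQd_general {n p q m : ℕ} (P : MPSC n p q m) (zs d : Euc n)
    (hlicq : P.LICQd zs d) :
    P.StronglyMStatDir zs d ↔
      ((∀ i, P.G i zs * P.H i zs = 0) ∧
        ∀ i ∈ P.IGH zs, ⟪P.G' i zs, d⟫_ℝ * ⟪P.H' i zs, d⟫_ℝ = 0) ∧ P.SStatDir zs d := by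
  rw [← MPSC.activeG_union_activeH_eq_univ_iff]
  exact ⟨fun hstrong => ⟨hstrong.activeG_union_activeH_eq_univ, hstrong.sStatDir hlicq⟩,
    fun ⟨hcover, hS⟩ => hS.stronglyMStatDir hlicq hcover⟩

/-- under MPSC-LICQ(d), strong M-stationarity in direction `d` is
equivalent to S-stationarity in direction `d`. -/
theorem mpsc_strongM_iff_S_under_LICQd {n p q m : ℕ} (P : MPSC n p q m) (zs : Euc n)
    (hfeas : zs ∈ P.Feas) (d : Euc n) (hd : d ∈ P.LinCone zs) (hlicq : P.LICQd zs d) :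
    P.StronglyMStatDir zs d ↔ P.SStatDir zs d :=
  (mpsc_strongM_iff_S_under_LICQd_general P zs d hlicq).trans
    (and_iff_right ⟨hfeas.2.2, hd.2.2.2.2⟩)
end
end
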